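/- arXiv:2505.02782 — 3 statements merged into one kernel-verified Lean document; each statement's English description precedes it below -/
import Mathlib

section
/- Let 1 ≤ p ≤ 2 and Ω a measure space. There is a constant C_p such that for any finitely many f_1,…,f_N ∈ L^p(Ω): C_p^{-1}(Σ_j ‖f_j‖_p²)^{1/2} ≤ ∫_0^1 ‖Σ_j r_j(t) f_j‖_p dt ≤ C_p (Σ_j ‖f_j‖_p^p)^{1/p}. -/
open MeasureTheory

/-- The Rademacher functions `r_n(t) = sign (sin (2^n π t))`. -/
noncomputable def rademacher (n : ℕ) (t : ℝ) : ℝ :=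
  Real.sign (Real.sin (2 ^ n * Real.pi * t))

noncomputable def signAv {V : Type*} [AddCommGroup V] [Module ℝ V] :
    (N : ℕ) → ((Fin N → ℝ) → V) → V
  | 0, F => F Fin.elim0
  | N + 1, F => (1/2 : ℝ) • (signAv N (fun e => F (Fin.cons 1 e)) +
      signAv N (fun e => F (Fin.cons (-1) e)))

lemma measurable_realSign : Measurable Real.sign := by
  unfold Real.sign
  exact Measurable.ite measurableSet_Iio measurable_const
    (Measurable.ite measurableSet_Ioi measurable_const measurable_const)

lemma measurable_rademacher (n : ℕ) : Measurable (rademacher n) := by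
  unfold rademacher
  exact measurable_realSign.comp (by fun_prop)

lemma abs_rademacher_le (n : ℕ) (t : ℝ) : |rademacher n t| ≤ 1 := by
  unfold rademacher
  rcases Real.sign_apply_eq (Real.sin (2 ^ n * Real.pi * t)) with h | h | h <;> rw [h] <;> norm_num

lemma rademacher_succ (n : ℕ) (t : ℝ) : rademacher (n+1) t = rademacher n (2 * t) := by
  unfold rademacher
  congr 2
  ring

lemma rademacher_add_one (n : ℕ) (t : ℝ) : rademacher (n+1) (t + 1) = rademacher (n+1) t := by
  unfold rademacher
  congr 1
  have : 2 ^ (n+1) * Real.pi * (t+1) = 2 ^ (n+1) * Real.pi * t + ((2^n : ℕ) : ℝ) * (2 * Real.pi) := by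
    push_cast; ring
  rw [this, Real.sin_add_nat_mul_two_pi]

lemma rademacher_one_left {t : ℝ} (h0 : 0 < t) (h1 : t < 1/2) : rademacher 1 t = 1 := by
  unfold rademacher
  apply Real.sign_of_pos
  apply Real.sin_pos_of_pos_of_lt_pi
  · have := Real.pi_pos; positivity
  · nlinarith [Real.pi_pos]

lemma rademacher_one_right {t : ℝ} (h0 : 1/2 < t) (h1 : t < 1) : rademacher 1 t = -1 := by
  unfold rademacher
  apply Real.sign_of_neg
  have : 2 ^ 1 * Real.pi * t = (2 * Real.pi * t - Real.pi) + Real.pi := by ring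
  rw [this, Real.sin_add_pi, neg_lt_zero]
  apply Real.sin_pos_of_pos_of_lt_pi
  · nlinarith [Real.pi_pos]
  · nlinarith [Real.pi_pos]

/-- vector of Rademacher functions -/
noncomputable def radVec (N : ℕ) (t : ℝ) : Fin N → ℝ := fun j => rademacher (j.1+1) t

lemma radVec_succ (N : ℕ) (t : ℝ) :
    radVec (N+1) t = Fin.cons (rademacher 1 t) (radVec N (2*t)) := by
  funext j
  refine Fin.cases ?_ (fun i => ?_) j
  · simp [radVec]
  · simp [radVec, rademacher_succ (i.1+1)]

lemma radVec_add_one (N : ℕ) (t : ℝ) : radVec N (t + 1) = radVec N t := by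
  funext j
  exact rademacher_add_one _ _

lemma intervalIntegrable_radVec (N : ℕ) (F : (Fin N → ℝ) → ℝ) (hF : Continuous F) (a b : ℝ) :
    IntervalIntegrable (fun t => F (radVec N t)) volume a b := by
  have hm : Measurable (fun t => F (radVec N t)) :=
    hF.measurable.comp (measurable_pi_lambda _ fun j => measurable_rademacher _)
  obtain ⟨M, hM⟩ := (isCompact_closedBall (0 : Fin N → ℝ) 1).exists_bound_of_continuousOn
    hF.continuousOn
  refine (intervalIntegrable_const (c := M)).mono_fun hm.aestronglyMeasurable ?_
  refine Filter.Eventually.of_forall fun t => ?_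
  refine (hM _ ?_).trans (le_abs_self M)
  rw [mem_closedBall_zero_iff, pi_norm_le_iff_of_nonneg zero_le_one]
  exact fun j => abs_rademacher_le _ _

lemma integral_radVec (N : ℕ) : ∀ (F : (Fin N → ℝ) → ℝ), Continuous F →
    ∫ t in (0:ℝ)..1, F (radVec N t) = signAv N F := by
  induction N with
  | zero =>
    intro F hF
    have : ∀ t, radVec 0 t = Fin.elim0 := fun t => Subsingleton.elim _ _
    simp [this, signAv]
  | succ N ih =>
    intro F hF
    rw [← intervalIntegral.integral_add_adjacent_intervals (b := 1/2)
      (intervalIntegrable_radVec _ F hF _ _) (intervalIntegrable_radVec _ F hF _ _)]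
    have hc : ∀ c : ℝ, Continuous (fun e : Fin N → ℝ => F (Fin.cons c e)) := fun c =>
      hF.comp (Continuous.finCons continuous_const continuous_id)
    have e1 : ∫ t in (0:ℝ)..(1/2), F (radVec (N+1) t) =
        ∫ t in (0:ℝ)..(1/2), F (Fin.cons 1 (radVec N (2*t))) := by
      rw [intervalIntegral.integral_of_le (by norm_num), intervalIntegral.integral_of_le (by norm_num),
        integral_Ioc_eq_integral_Ioo, integral_Ioc_eq_integral_Ioo]
      refine setIntegral_congr_fun measurableSet_Ioo fun t ht => ?_
      simp only [radVec_succ, rademacher_one_left ht.1 ht.2]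
    have e2 : ∫ t in (1/2:ℝ)..1, F (radVec (N+1) t) =
        ∫ t in (1/2:ℝ)..1, F (Fin.cons (-1) (radVec N (2*t))) := by
      rw [intervalIntegral.integral_of_le (by norm_num), intervalIntegral.integral_of_le (by norm_num),
        integral_Ioc_eq_integral_Ioo, integral_Ioc_eq_integral_Ioo]
      refine setIntegral_congr_fun measurableSet_Ioo fun t ht => ?_
      simp only [radVec_succ, rademacher_one_right ht.1 ht.2]
    rw [e1, e2]
    rw [intervalIntegral.integral_comp_mul_left (fun t => F (Fin.cons 1 (radVec N t))) two_ne_zero,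
      intervalIntegral.integral_comp_mul_left (fun t => F (Fin.cons (-1) (radVec N t))) two_ne_zero]
    have e3 : ∫ t in (2 * (1/2) : ℝ)..(2*1), F (Fin.cons (-1) (radVec N t)) =
        ∫ t in (0:ℝ)..1, F (Fin.cons (-1) (radVec N t)) := by
      have := intervalIntegral.integral_comp_add_right (a := 0) (b := 1)
        (fun t => F (Fin.cons (-1) (radVec N t))) 1
      simp only [radVec_add_one] at this
      rw [this]; norm_num
    rw [e3]
    have e4 : (2 * (1/2) : ℝ) = 1 := by norm_num
    rw [mul_zero, e4, ih _ (hc 1), ih _ (hc (-1))]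
    simp only [signAv, smul_eq_mul]
    ring

section av
variable {V : Type*} [AddCommGroup V] [Module ℝ V]

lemma signAv_mono (N : ℕ) : ∀ (F G : (Fin N → ℝ) → ℝ), (∀ e, F e ≤ G e) →
    signAv N F ≤ signAv N G := by
  induction N with
  | zero => intro F G h; exact h _
  | succ N ih =>
    intro F G h
    simp only [signAv, smul_eq_mul]
    linarith [ih _ _ (fun e => h (Fin.cons 1 e)), ih _ _ (fun e => h (Fin.cons (-1) e))]

lemma signAv_sub (N : ℕ) : ∀ (F G : (Fin N → ℝ) → ℝ) (a b : ℝ),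
    signAv N (fun e => a * F e - b * G e) = a * signAv N F - b * signAv N G := by
  induction N with
  | zero => intro F G a b; rfl
  | succ N ih =>
    intro F G a b
    simp only [signAv, smul_eq_mul, ih]
    ring

lemma signAv_nonneg (N : ℕ) : ∀ (F : (Fin N → ℝ) → ℝ), (∀ e, 0 ≤ F e) → 0 ≤ signAv N F := by
  induction N with
  | zero => intro F h; exact h _
  | succ N ih =>
    intro F h
    simp only [signAv, smul_eq_mul]
    linarith [ih _ (fun e => h (Fin.cons 1 e)), ih _ (fun e => h (Fin.cons (-1) e))]

lemma signAv_rpow_le {p : ℝ} (hp : 1 ≤ p) (N : ℕ) : ∀ (F : (Fin N → ℝ) → ℝ), (∀ e, 0 ≤ F e) →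
    (signAv N F) ^ p ≤ signAv N (fun e => F e ^ p) := by
  induction N with
  | zero => intro F h; exact le_rfl
  | succ N ih =>
    intro F h
    simp only [signAv, smul_eq_mul]
    have h1 := ih _ (fun e => h (Fin.cons 1 e))
    have h2 := ih _ (fun e => h (Fin.cons (-1) e))
    have n1 := signAv_nonneg N _ (fun e => h (Fin.cons 1 e))
    have n2 := signAv_nonneg N _ (fun e => h (Fin.cons (-1) e))
    have := (convexOn_rpow hp).2 (Set.mem_Ici.2 n1) (Set.mem_Ici.2 n2)
      (by norm_num : (0:ℝ) ≤ 1/2) (by norm_num : (0:ℝ) ≤ 1/2) (by norm_num)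
    simp only [smul_eq_mul, ← mul_add] at this
    linarith

lemma norm_signAv_le {E : Type*} [NormedAddCommGroup E] [NormedSpace ℝ E] (N : ℕ) :
    ∀ (F : (Fin N → ℝ) → E), ‖signAv N F‖ ≤ signAv N (fun e => ‖F e‖) := by
  induction N with
  | zero => intro F; exact le_rfl
  | succ N ih =>
    intro F
    simp only [signAv]
    rw [norm_smul, smul_eq_mul]
    norm_num
    exact (norm_add_le _ _).trans (add_le_add (ih _) (ih _))

/-- second moment -/
lemma signAv_sq (N : ℕ) : ∀ (a : Fin N → ℝ) (x : ℝ),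
    signAv N (fun e => (x + ∑ j, e j * a j) ^ 2) = x ^ 2 + ∑ j, a j ^ 2 := by
  induction N with
  | zero => intro a x; simp [signAv]
  | succ N ih =>
    intro a x
    simp only [signAv, smul_eq_mul, Fin.sum_univ_succ, Fin.cons_zero, Fin.cons_succ, ← add_assoc, ih]
    ring

/-- fourth moment -/
lemma signAv_four (N : ℕ) : ∀ (a : Fin N → ℝ) (x : ℝ),
    signAv N (fun e => (x + ∑ j, e j * a j) ^ 4) ≤
      x ^ 4 + 6 * x ^ 2 * ∑ j, a j ^ 2 + 3 * (∑ j, a j ^ 2) ^ 2 := by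
  induction N with
  | zero => intro a x; simp [signAv]
  | succ N ih =>
    intro a x
    simp only [signAv, smul_eq_mul, Fin.sum_univ_succ, Fin.cons_zero, Fin.cons_succ, ← add_assoc]
    have h1 := ih (fun j => a j.succ) (x + 1 * a 0)
    have h2 := ih (fun j => a j.succ) (x + -1 * a 0)
    nlinarith [sq_nonneg (a 0 ^ 2)]

/-- Khintchine lower bound -/
lemma khintchine (N : ℕ) (a : Fin N → ℝ) :
    Real.sqrt (∑ j, a j ^ 2) ≤ 2 * signAv N (fun e => |∑ j, e j * a j|) := by
  set s := Real.sqrt (∑ j, a j ^ 2) with hs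
  have hs0 : 0 ≤ s := Real.sqrt_nonneg _
  have hss : s ^ 2 = ∑ j, a j ^ 2 := Real.sq_sqrt (Finset.sum_nonneg fun j _ => sq_nonneg _)
  rcases hs0.eq_or_lt with h | h
  · rw [← h]
    have := signAv_nonneg N (fun e => |∑ j, e j * a j|) (fun e => abs_nonneg _)
    linarith
  have h2 := signAv_sq N a 0
  have h4 := signAv_four N a 0
  simp only [zero_add] at h2 h4
  rw [← hss] at h2 h4
  have key : ∀ y : ℝ, s ^ 2 * y ^ 2 - (1/6) * y ^ 4 ≤ s ^ 3 * |y| := by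
    intro y
    rw [← sq_abs y, ← Even.pow_abs (n := 4) (by decide) y]
    have hy := abs_nonneg y
    set z := |y|
    have : 0 ≤ z ^ 3 - 6 * z * s ^ 2 + 6 * s ^ 3 := by
      nlinarith [mul_nonneg hy (sq_nonneg (z - 1.414 * s)), mul_nonneg h.le (sq_nonneg (z - 1.414 * s)), pow_pos h 3, mul_nonneg hy (sq_nonneg s)]
    nlinarith [mul_nonneg hy this]
  have hm := signAv_mono N _ _ (fun e => key (∑ j, e j * a j))
  rw [signAv_sub N (fun e => (∑ j, e j * a j)^2) (fun e => (∑ j, e j * a j)^4)] at hm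
  have hr := signAv_sub N (fun e => |∑ j, e j * a j|) (fun _ => 0) (s^3) 0
  simp only [zero_mul, sub_zero] at hr
  rw [hr, h2] at hm
  have : s ^ 3 * s ≤ s ^ 3 * (2 * signAv N (fun e => |∑ j, e j * a j|)) := by nlinarith
  exact le_of_mul_le_mul_left this (pow_pos h 3)
end av

section Lp
variable {α : Type*} [MeasurableSpace α] {μ : Measure α}

lemma Lp_norm_rpow {p : ℝ} (hp1 : 1 ≤ p) (f : Lp ℝ (ENNReal.ofReal p) μ) :
    ‖f‖ ^ p = ∫ x, |f x| ^ p ∂μ := by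
  have hp0 : 0 < p := by linarith
  have h0 : ENNReal.ofReal p ≠ 0 := by simpa using hp0
  have hi : 0 ≤ ∫ x, |f x| ^ p ∂μ := integral_nonneg fun x => by positivity
  rw [Lp.norm_def, (Lp.memLp f).eLpNorm_eq_integral_rpow_norm h0 ENNReal.ofReal_ne_top,
    ENNReal.toReal_ofReal hp0.le]
  simp only [Real.norm_eq_abs]
  rw [ENNReal.toReal_ofReal (by positivity), ← Real.rpow_mul hi, inv_mul_cancel₀ hp0.ne',
    Real.rpow_one]

lemma Lp_integrable_rpow {p : ℝ} (hp1 : 1 ≤ p) (f : Lp ℝ (ENNReal.ofReal p) μ) :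
    Integrable (fun x => |f x| ^ p) μ := by
  have hp0 : 0 < p := by linarith
  have h0 : ENNReal.ofReal p ≠ 0 := by simpa using hp0
  have := (Lp.memLp f).integrable_norm_rpow h0 ENNReal.ofReal_ne_top
  simpa [ENNReal.toReal_ofReal hp0.le] using this

lemma abs_rpow_eq (x p : ℝ) : |x| ^ p = (x ^ 2) ^ (p/2) := by
  rw [← sq_abs, ← Real.rpow_natCast, ← Real.rpow_mul (abs_nonneg x)]
  congr 1
  push_cast; ring

lemma scalar_clarkson {p : ℝ} (hp1 : 1 ≤ p) (hp2 : p ≤ 2) (x y : ℝ) :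
    |x + y| ^ p + |x - y| ^ p ≤ 2 * (|x| ^ p + |y| ^ p) := by
  simp only [abs_rpow_eq]
  have h1 := (Real.concaveOn_rpow (p := p/2) (by linarith) (by linarith)).2
    (Set.mem_Ici.2 (sq_nonneg (x+y))) (Set.mem_Ici.2 (sq_nonneg (x-y)))
    (by norm_num : (0:ℝ) ≤ 1/2) (by norm_num : (0:ℝ) ≤ 1/2) (by norm_num)
  have h2 := Real.rpow_add_le_add_rpow (sq_nonneg x) (sq_nonneg y) (p := p/2)
    (by linarith) (by linarith)
  simp only [smul_eq_mul] at h1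
  have : 1/2 * (x+y)^2 + 1/2 * (x-y)^2 = x^2+y^2 := by ring
  rw [this] at h1
  linarith

lemma Lp_clarkson {p : ℝ} (hp1 : 1 ≤ p) (hp2 : p ≤ 2) [Fact (1 ≤ ENNReal.ofReal p)]
    (f g : Lp ℝ (ENNReal.ofReal p) μ) :
    ‖f + g‖ ^ p + ‖f - g‖ ^ p ≤ 2 * (‖f‖ ^ p + ‖g‖ ^ p) := by
  simp only [Lp_norm_rpow hp1]
  rw [← integral_add (Lp_integrable_rpow hp1 _) (Lp_integrable_rpow hp1 _),
    ← integral_add (Lp_integrable_rpow hp1 _) (Lp_integrable_rpow hp1 _), ← integral_const_mul]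
  refine integral_mono_ae ((Lp_integrable_rpow hp1 _).add (Lp_integrable_rpow hp1 _))
    (((Lp_integrable_rpow hp1 _).add (Lp_integrable_rpow hp1 _)).const_mul 2) ?_
  filter_upwards [Lp.coeFn_add f g, Lp.coeFn_sub f g] with x h1 h2
  simp only [Pi.add_apply, Pi.sub_apply] at h1 h2
  simp only [h1, h2]
  exact scalar_clarkson hp1 hp2 _ _

lemma type_p {p : ℝ} (hp1 : 1 ≤ p) (hp2 : p ≤ 2) [Fact (1 ≤ ENNReal.ofReal p)] (N : ℕ) :
    ∀ (f : Fin N → Lp ℝ (ENNReal.ofReal p) μ) (g : Lp ℝ (ENNReal.ofReal p) μ),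
      signAv N (fun e => ‖g + ∑ j, e j • f j‖ ^ p) ≤ ‖g‖ ^ p + ∑ j, ‖f j‖ ^ p := by
  induction N with
  | zero => intro f g; simp [signAv]
  | succ N ih =>
    intro f g
    simp only [signAv, smul_eq_mul, Fin.sum_univ_succ, Fin.cons_zero, Fin.cons_succ, ← add_assoc]
    have h1 := ih (fun j => f j.succ) (g + (1:ℝ) • f 0)
    have h2 := ih (fun j => f j.succ) (g + (-1:ℝ) • f 0)
    have h3 := Lp_clarkson hp1 hp2 g (f 0)
    have e1 : g + (1:ℝ) • f 0 = g + f 0 := by rw [one_smul]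
    have e2 : g + (-1:ℝ) • f 0 = g - f 0 := by rw [neg_one_smul, sub_eq_add_neg]
    rw [e1] at h1 ⊢
    rw [e2] at h2 ⊢
    linarith

lemma coeFn_signAv {p : ENNReal} (N : ℕ) :
    ∀ (F : (Fin N → ℝ) → Lp ℝ p μ) (G : (Fin N → ℝ) → α → ℝ), (∀ e, F e =ᵐ[μ] G e) →
      (signAv N F : Lp ℝ p μ) =ᵐ[μ] fun x => signAv N (fun e => G e x) := by
  induction N with
  | zero => intro F G h; exact h _
  | succ N ih =>
    intro F G h
    have h1 := ih _ _ (fun e => h (Fin.cons 1 e))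
    have h2 := ih _ _ (fun e => h (Fin.cons (-1) e))
    simp only [signAv]
    filter_upwards [h1, h2, Lp.coeFn_smul (1/2 : ℝ) (signAv N (fun e => F (Fin.cons 1 e)) +
      signAv N (fun e => F (Fin.cons (-1) e))), Lp.coeFn_add (signAv N (fun e => F (Fin.cons 1 e)))
      (signAv N (fun e => F (Fin.cons (-1) e)))] with x k1 k2 k3 k4
    rw [k3, Pi.smul_apply, k4, Pi.add_apply, k1, k2]

lemma coeFn_sum_smul {p : ENNReal} (N : ℕ) : ∀ (f : Fin N → Lp ℝ p μ) (e : Fin N → ℝ),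
    (∑ j, e j • f j : Lp ℝ p μ) =ᵐ[μ] fun x => ∑ j, e j * f j x := by
  induction N with
  | zero =>
    intro f e
    simp only [Finset.univ_eq_empty, Finset.sum_empty]
    exact Lp.coeFn_zero _ _ _
  | succ N ih =>
    intro f e
    simp only [Fin.sum_univ_succ]
    filter_upwards [ih (fun j => f j.succ) (fun j => e j.succ), Lp.coeFn_smul (e 0) (f 0),
      Lp.coeFn_add (e 0 • f 0) (∑ j : Fin N, e j.succ • f j.succ)] with x h1 h2 h3
    rw [h3, Pi.add_apply, h1, h2, Pi.smul_apply, smul_eq_mul]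

/-- concavity -/
lemma weighted_le {p : ℝ} (hp1 : 1 ≤ p) (hp2 : p ≤ 2) {N : ℕ} (b y : Fin N → ℝ)
    (hb0 : ∀ j, 0 ≤ b j) (hb : ∑ j, b j ^ 2 = 1) :
    ∑ j, b j ^ 2 * (|y j| / b j) ^ p ≤ Real.sqrt (∑ j, y j ^ 2) ^ p := by
  have hp0 : 0 < p := by linarith
  have h := Real.rpow_arith_mean_le_arith_mean_rpow Finset.univ (fun j => b j ^ 2)
    (fun j => (|y j| / b j) ^ p) (fun j _ => sq_nonneg _) hb
    (fun j _ => Real.rpow_nonneg (div_nonneg (abs_nonneg _) (hb0 j)) _) (p := 2/p)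
    (by rw [le_div_iff₀ hp0]; linarith)
  have hz : ∀ j, ((|y j| / b j) ^ p) ^ (2/p) = (|y j| / b j) ^ 2 := by
    intro j
    rw [← Real.rpow_mul (div_nonneg (abs_nonneg _) (hb0 j)), mul_div_cancel₀ _ hp0.ne']
    norm_num
  simp only [hz] at h
  have h' : ∑ j, b j ^ 2 * (|y j| / b j) ^ 2 ≤ ∑ j, y j ^ 2 := by
    refine Finset.sum_le_sum fun j _ => ?_
    by_cases hj : b j = 0
    · rw [hj]; simp; positivity
    · rw [div_pow, sq_abs]; field_simp; exact le_rfl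
  set T := ∑ j, b j ^ 2 * (|y j| / b j) ^ p with hT
  have hT0 : 0 ≤ T := Finset.sum_nonneg fun j _ =>
    mul_nonneg (sq_nonneg _) (Real.rpow_nonneg (div_nonneg (abs_nonneg _) (hb0 j)) _)
  have h3 := Real.rpow_le_rpow (by positivity) (h.trans h') (by positivity : 0 ≤ p/2)
  rw [← Real.rpow_mul hT0, show 2/p * (p/2) = 1 by field_simp, Real.rpow_one] at h3
  refine h3.trans (le_of_eq ?_)
  rw [Real.sqrt_eq_rpow, ← Real.rpow_mul (by positivity)]
  congr 1; ring

lemma cotype_two {p : ℝ} (hp1 : 1 ≤ p) (hp2 : p ≤ 2) [Fact (1 ≤ ENNReal.ofReal p)] (N : ℕ)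
    (f : Fin N → Lp ℝ (ENNReal.ofReal p) μ) :
    Real.sqrt (∑ j, ‖f j‖ ^ 2) ≤ 2 * signAv N (fun e => ‖∑ j, e j • f j‖) := by
  have hp0 : 0 < p := by linarith
  set A := Real.sqrt (∑ j, ‖f j‖ ^ 2) with hA
  have hA0 : 0 ≤ A := Real.sqrt_nonneg _
  have hAA : A ^ 2 = ∑ j, ‖f j‖ ^ 2 := Real.sq_sqrt (Finset.sum_nonneg fun j _ => sq_nonneg _)
  rcases hA0.eq_or_lt with h | h
  · rw [← h]
    have := signAv_nonneg N (fun e => ‖∑ j, e j • f j‖) (fun e => norm_nonneg _)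
    linarith
  set H : Lp ℝ (ENNReal.ofReal p) μ := signAv N (fun e => |∑ j, e j • f j|) with hH
  have hHn : ‖H‖ ≤ signAv N (fun e => ‖∑ j, e j • f j‖) := by
    have := norm_signAv_le N (fun e => |∑ j, e j • f j|)
    simpa only [norm_abs_eq_norm] using this
  have hHc : H =ᵐ[μ] fun x => signAv N (fun e => |∑ j, e j * f j x|) := by
    refine coeFn_signAv N _ (fun e x => |∑ j, e j * f j x|) fun e => ?_
    filter_upwards [Lp.coeFn_abs (∑ j, e j • f j), coeFn_sum_smul N f e] with x h1 h2
    rw [h1, h2]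
  set b : Fin N → ℝ := fun j => ‖f j‖ / A with hbdef
  have hb0 : ∀ j, 0 ≤ b j := fun j => by positivity
  have hb : ∑ j, b j ^ 2 = 1 := by
    simp only [hbdef, div_pow]
    rw [← Finset.sum_div, ← hAA, div_self (by positivity)]
  have key : ∑ j, b j ^ 2 * (‖f j‖ / b j) ^ p ≤ (2 * ‖H‖) ^ p := by
    rw [Real.mul_rpow (by norm_num) (norm_nonneg _), Lp_norm_rpow hp1 H, ← integral_const_mul]
    have e1 : ∑ j, b j ^ 2 * (‖f j‖ / b j) ^ p =
        ∫ x, ∑ j, b j ^ 2 * (|f j x| / b j) ^ p ∂μ := by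
      simp only [Real.div_rpow (abs_nonneg _) (hb0 _), Real.div_rpow (norm_nonneg _) (hb0 _)]
      rw [integral_finsetSum]
      · refine Finset.sum_congr rfl fun j _ => ?_
        rw [integral_const_mul, integral_div, Lp_norm_rpow hp1]
      · intro j _
        exact ((Lp_integrable_rpow hp1 (f j)).div_const _).const_mul _
    rw [e1]
    refine integral_mono_ae ?_ ((Lp_integrable_rpow hp1 H).const_mul _) ?_
    · simp only [Real.div_rpow (abs_nonneg _) (hb0 _)]
      exact integrable_finsetSum _ fun j _ =>
        ((Lp_integrable_rpow hp1 (f j)).div_const _).const_mul _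
    · filter_upwards [hHc] with x hx
      refine (weighted_le hp1 hp2 b (fun j => f j x) hb0 hb).trans ?_
      rw [← Real.mul_rpow (by norm_num) (abs_nonneg _)]
      refine Real.rpow_le_rpow (Real.sqrt_nonneg _) ?_ hp0.le
      refine (khintchine N (fun j => f j x)).trans ?_
      rw [hx]
      exact mul_le_mul_of_nonneg_left (le_abs_self _) (by norm_num)
  have e2 : ∑ j, b j ^ 2 * (‖f j‖ / b j) ^ p = A ^ p := by
    rw [← one_mul (A ^ p), ← hb, Finset.sum_mul]
    refine Finset.sum_congr rfl fun j _ => ?_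
    by_cases hj : ‖f j‖ = 0
    · simp [hbdef, hj]
    · congr 2
      simp only [hbdef]
      field_simp
  rw [e2] at key
  have := (Real.rpow_le_rpow_iff hA0 (by positivity) hp0).1 key
  linarith
end Lp

/-- For `1 ≤ p ≤ 2` and any measure space `Ω` there is a constant `C_p`
such that for any `f_1, …, f_N ∈ L^p(Ω)`,
`C_p⁻¹ (∑ ‖f_j‖_p²)^{1/2} ≤ ∫_0^1 ‖∑ r_j(t) f_j‖_p dt ≤ C_p (∑ ‖f_j‖_p^p)^{1/p}`
(`L^p` has type `p` and cotype `2`). -/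
theorem stmt2 (p : ℝ) (hp1 : 1 ≤ p) (hp2 : p ≤ 2) [Fact (1 ≤ ENNReal.ofReal p)]
    {α : Type*} [MeasurableSpace α] (μ : Measure α) :
    ∃ C : ℝ, 0 < C ∧
      ∀ (N : ℕ) (f : Fin N → Lp ℝ (ENNReal.ofReal p) μ),
        C⁻¹ * (∑ j, ‖f j‖ ^ 2) ^ ((1:ℝ)/2) ≤
            ∫ t in Set.Icc (0:ℝ) 1, ‖∑ j, rademacher (j.1 + 1) t • f j‖ ∧
        (∫ t in Set.Icc (0:ℝ) 1, ‖∑ j, rademacher (j.1 + 1) t • f j‖) ≤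
            C * (∑ j, ‖f j‖ ^ p) ^ (1/p) := by
  have hp0 : 0 < p := by linarith
  have hI : ∀ (N : ℕ) (f : Fin N → Lp ℝ (ENNReal.ofReal p) μ),
      (∫ t in Set.Icc (0:ℝ) 1, ‖∑ j, rademacher (j.1 + 1) t • f j‖) =
        signAv N (fun e => ‖∑ j, e j • f j‖) := by
    intro N f
    rw [← integral_radVec N (fun e => ‖∑ j, e j • f j‖) (by fun_prop),
      intervalIntegral.integral_of_le zero_le_one, integral_Icc_eq_integral_Ioc]
    rfl
  refine ⟨2, two_pos, fun N f => ?_⟩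
  rw [hI N f]
  have hn := signAv_nonneg N (fun e => ‖∑ j, e j • f j‖) (fun e => norm_nonneg _)
  constructor
  · have := cotype_two hp1 hp2 N f
    rw [Real.sqrt_eq_rpow] at this
    linarith
  · have h1 := signAv_rpow_le hp1 N (fun e => ‖∑ j, e j • f j‖) (fun e => norm_nonneg _)
    have h2 := type_p hp1 hp2 N f 0
    simp only [zero_add, norm_zero, Real.zero_rpow hp0.ne'] at h2
    have hs : 0 ≤ ∑ j, ‖f j‖ ^ p := Finset.sum_nonneg fun j _ => by positivity
    have h3 := Real.rpow_le_rpow (by positivity) (h1.trans h2) (by positivity : 0 ≤ 1/p)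
    rw [← Real.rpow_mul hn, mul_one_div_cancel hp0.ne', Real.rpow_one] at h3
    have h4 : 0 ≤ (∑ j, ‖f j‖ ^ p) ^ (1/p) := Real.rpow_nonneg hs _
    linarith
end

section
/- Let X be a reflexive Banach space and {(u_j, u_j*)} an unconditional Schauder frame for X. Then {(u_j*, u_j)} is an unconditional Schauder frame for X*; moreover, if {(u_j, u_j*)} is K-unconditional then so is {(u_j*, u_j)}. -/
open MeasureTheory

lemma aux_lim {X : Type*} [NormedAddCommGroup X] [NormedSpace ℝ X] [CompleteSpace X]
    (f : ℕ → X →L[ℝ] ℝ) (h : ∀ x, Summable (fun j => f j x)) :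
    ∃ g : X →L[ℝ] ℝ, ∀ x, HasSum (fun j => f j x) (g x) := by
  have ht : Filter.Tendsto (fun (n : ℕ) (x : X) => (∑ j ∈ Finset.range n, f j) x) Filter.atTop
      (nhds (fun x => ∑' j, f j x)) := by
    rw [tendsto_pi_nhds]
    intro x
    simpa using (h x).hasSum.tendsto_sum_nat
  exact ⟨continuousLinearMapOfTendsto _ ht, fun x => (h x).hasSum⟩

lemma aux_mem {X : Type*} [NormedAddCommGroup X] [NormedSpace ℝ X]
    (hrefl : Function.Surjective (NormedSpace.inclusionInDoubleDual ℝ X))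
    (f : ℕ → X →L[ℝ] ℝ) (g : X →L[ℝ] ℝ) (hg : ∀ x, (∀ j, f j x = 0) → g x = 0) :
    g ∈ closure (Submodule.span ℝ (Set.range f) : Set (X →L[ℝ] ℝ)) := by
  by_contra hn
  obtain ⟨φ, a, h1, h2⟩ := geometric_hahn_banach_closed_point
    ((Submodule.span ℝ (Set.range f)).convex.closure) isClosed_closure hn
  obtain ⟨x, rfl⟩ := hrefl φ
  have h0 := h1 0 (subset_closure (Submodule.zero_mem _))
  simp only [map_zero] at h0
  have hz : ∀ j, f j x = 0 := by
    intro j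
    by_contra hj
    have := h1 ((a / f j x) • f j) (subset_closure
      (Submodule.smul_mem _ _ (Submodule.subset_span ⟨j, rfl⟩)))
    simp [hj] at this
  have := hg x hz
  simp [this] at h2
  linarith

lemma aux_main {X : Type*} [NormedAddCommGroup X] [NormedSpace ℝ X] [CompleteSpace X]
    (hrefl : Function.Surjective (NormedSpace.inclusionInDoubleDual ℝ X))
    (f : ℕ → X →L[ℝ] ℝ) (h : ∀ x, Summable (fun j => f j x)) : Summable f := by
  classical
  have hb : ∀ (θ : ℕ → Bool) (x : X), Summable (fun j => (if θ j then f j else 0 : X →L[ℝ] ℝ) x) := by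
    intro θ x
    refine Summable.of_norm_bounded (h x).norm (fun j => ?_)
    split_ifs <;> simp
  choose S hS using fun θ : ℕ → Bool => aux_lim _ (hb θ)
  have hcont : ∀ x, Continuous (fun θ => S θ x) := by
    intro x
    have : (fun θ => S θ x) = fun θ : ℕ → Bool =>
        ∑' j, (fun b : Bool => (if b then f j else 0 : X →L[ℝ] ℝ) x) (θ j) := by
      ext θ; exact (hS θ x).tsum_eq.symm
    rw [this]
    refine continuous_tsum (fun j => (continuous_of_discreteTopology
      (f := fun b : Bool => (if b then f j else 0 : X →L[ℝ] ℝ) x)).comp (continuous_apply j))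
      (h x).norm (fun j θ => ?_)
    dsimp only
    split_ifs <;> simp
  have hmem : ∀ θ, S θ ∈ closure (Submodule.span ℝ (Set.range f) : Set (X →L[ℝ] ℝ)) := by
    intro θ
    refine aux_mem hrefl f _ (fun x hx => ?_)
    rw [← (hS θ x).tsum_eq]
    convert tsum_zero with j
    split_ifs <;> simp [hx]
  have hsep : TopologicalSpace.IsSeparable
      (closure (Submodule.span ℝ (Set.range f) : Set (X →L[ℝ] ℝ))) :=
    ((Set.countable_range f).isSeparable.span).closure
  obtain ⟨c, hc, hcd⟩ := hsep
  rw [summable_iff_vanishing_norm]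
  intro ε hε
  have hclosed : ∀ g : c, IsClosed {θ : ℕ → Bool | ‖S θ - g‖ ≤ ε / 3} := by
    intro g
    have : {θ : ℕ → Bool | ‖S θ - g‖ ≤ ε / 3} =
        ⋂ x : X, {θ | ‖S θ x - (g : X →L[ℝ] ℝ) x‖ ≤ ε / 3 * ‖x‖} := by
      ext θ
      simp only [Set.mem_ofPred_eq, Set.mem_iInter]
      rw [ContinuousLinearMap.opNorm_le_iff (by positivity)]
      rfl
    rw [this]
    exact isClosed_iInter fun x => isClosed_le ((hcont x).sub continuous_const).norm continuous_const
  have : Countable c := hc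
  have hU : ⋃ g : c, {θ : ℕ → Bool | ‖S θ - g‖ ≤ ε / 3} = Set.univ := by
    ext θ
    simp only [Set.mem_iUnion, Set.mem_univ, iff_true, Set.mem_ofPred_eq]
    obtain ⟨g, hg, hd⟩ := Metric.mem_closure_iff.1 (hcd (hmem θ)) (ε / 3) (by positivity)
    exact ⟨⟨g, hg⟩, by rw [← dist_eq_norm]; exact hd.le⟩
  obtain ⟨g, η, hη⟩ := nonempty_interior_of_iUnion_of_closed hclosed hU
  obtain ⟨I, v, hv, hsub⟩ := isOpen_pi_iff.1 isOpen_interior η hη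
  refine ⟨I, fun t ht => ?_⟩
  have key : ∀ b : Bool, ‖S (fun j => if j ∈ t then b else η j) - g‖ ≤ ε / 3 := by
    intro b
    have : (fun j => if j ∈ t then b else η j) ∈ (I : Set ℕ).pi v := by
      intro j hj
      have : j ∉ t := fun hjt => Finset.disjoint_left.1 ht hjt hj
      simpa [this] using (hv j hj).2
    have h3 := interior_subset (hsub this)
    exact h3
  have hdiff : ∑ i ∈ t, f i = S (fun j => if j ∈ t then true else η j)
      - S (fun j => if j ∈ t then false else η j) := by
    ext x
    have h1 := (hS (fun j => if j ∈ t then true else η j) x).sub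
      (hS (fun j => if j ∈ t then false else η j) x)
    have h2 : HasSum (fun j => if j ∈ t then f j x else 0) (∑ j ∈ t, f j x) := by
      have := hasSum_sum_of_ne_finset_zero (f := fun j => if j ∈ t then f j x else 0) (s := t)
        (L := SummationFilter.unconditional ℕ)
        (fun j hj => by simp [hj])
      convert this using 1
      exact Finset.sum_congr rfl (fun j hj => by simp [hj])
    simp only [sum_apply, sub_apply]
    refine h2.unique ?_
    have he : (fun j => if j ∈ t then f j x else 0) = fun b =>
        (if (if b ∈ t then true else η b) = true then f b else 0 : X →L[ℝ] ℝ) x -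
        (if (if b ∈ t then false else η b) = true then f b else 0 : X →L[ℝ] ℝ) x := by
      funext j
      by_cases hj : j ∈ t <;> simp [hj]
    rw [he]
    exact h1
  rw [hdiff]
  have := norm_sub_le (S (fun j => if j ∈ t then true else η j) - g)
    (S (fun j => if j ∈ t then false else η j) - g)
  rw [sub_sub_sub_cancel_right] at this
  linarith [key true, key false]

/-- If `X` is a reflexive Banach space and `{(u_j, u_j*)}` an
unconditional Schauder frame for `X`, then `{(u_j*, u_j)}` is an unconditional
Schauder frame for `X*`; moreover if `{(u_j, u_j*)}` is `K`-unconditional then so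
is `{(u_j*, u_j)}`. -/
theorem stmt4 {X : Type*} [NormedAddCommGroup X] [NormedSpace ℝ X] [CompleteSpace X]
    (hrefl : Function.Surjective (NormedSpace.inclusionInDoubleDual ℝ X))
    (u : ℕ → X) (ustar : ℕ → X →L[ℝ] ℝ)
    (hframe : ∀ x : X, HasSum (fun j => ustar j x • u j) x) :
    (∀ xs : X →L[ℝ] ℝ, HasSum (fun j => xs (u j) • ustar j) xs) ∧
    ∀ K : ℝ,
      (∀ (x : X) (θ : ℕ → ℝ), (∀ j, |θ j| ≤ 1) →
        ∃ y : X, HasSum (fun j => θ j • (ustar j x • u j)) y ∧ ‖y‖ ≤ K * ‖x‖) →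
      (∀ (xs : X →L[ℝ] ℝ) (θ : ℕ → ℝ), (∀ j, |θ j| ≤ 1) →
        ∃ ys : X →L[ℝ] ℝ,
          HasSum (fun j => θ j • (xs (u j) • ustar j)) ys ∧ ‖ys‖ ≤ K * ‖xs‖) := by
  constructor
  · intro xs
    have hx : ∀ x, HasSum (fun j => (xs (u j) • ustar j) x) (xs x) := by
      intro x
      convert (hframe x).mapL xs using 2 with j
      simp [mul_comm]
    have hs := aux_main hrefl _ (fun x => (hx x).summable)
    convert hs.hasSum using 1
    ext x
    exact (hx x).unique (hs.hasSum.mapL (ContinuousLinearMap.apply ℝ ℝ x))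
  · intro K hK xs θ hθ
    have hx : ∀ x, ∃ y, HasSum (fun j => (θ j • (xs (u j) • ustar j)) x) (xs y) ∧
        ‖y‖ ≤ K * ‖x‖ := by
      intro x
      obtain ⟨y, hy, hn⟩ := hK x θ hθ
      refine ⟨y, ?_, hn⟩
      convert hy.mapL xs using 2 with j
      simp [mul_comm]
    have hs := aux_main hrefl _ (fun x => (hx x).choose_spec.1.summable)
    refine ⟨_, hs.hasSum, ContinuousLinearMap.opNorm_le_bound _ ?_ (fun x => ?_)⟩
    · by_cases h0 : xs = 0
      · simp [h0]
      · obtain ⟨x, hxx⟩ : ∃ x, xs x ≠ 0 := by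
          by_contra! hc
          exact h0 (ContinuousLinearMap.ext hc)
        have hxp : 0 < ‖x‖ := norm_pos_iff.2 (fun h => hxx (by simp [h]))
        obtain ⟨y, -, hy⟩ := hx x
        have : 0 ≤ K := nonneg_of_mul_nonneg_left ((norm_nonneg y).trans hy) hxp
        positivity
    · obtain ⟨y, hy, hn⟩ := hx x
      have := hy.unique (hs.hasSum.mapL (ContinuousLinearMap.apply ℝ ℝ x))
      simp only [ContinuousLinearMap.apply_apply] at this
      rw [← this]
      calc ‖xs y‖ ≤ ‖xs‖ * ‖y‖ := xs.le_opNorm y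
        _ ≤ ‖xs‖ * (K * ‖x‖) := by gcongr
        _ = K * ‖xs‖ * ‖x‖ := by ring
end

section
/- For every p > 1 there exist a sequence {g_j} of measurable functions on [0,1] taking only the values −1 and +1, and bounded linear functionals {g_j*} on L^p[0,1], such that every f ∈ L^p[0,1] admits the expansion f = Σ_j g_j*(f) g_j with unconditional convergence in L^p[0,1]. -/
section Helpers

open MeasureTheory Set

lemma phi_aux (p c s : ℝ) (hp : 1 < p) (hs : s = 1 ∨ s = -1)
    (h1 : p ≤ 2 * c) (h2 : p ≤ 2 * c * (p - 1)) :
    ConvexOn ℝ (Ici (1:ℝ)) (fun a : ℝ => (1 - c) - s * c * a + (c - 1) * a ^ p + s * c * a ^ (p - 1)) ∧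
    MonotoneOn (fun a : ℝ => (1 - c) - s * c * a + (c - 1) * a ^ p + s * c * a ^ (p - 1)) (Ici (1:ℝ)) := by
  set φ := (fun a : ℝ => (1 - c) - s * c * a + (c - 1) * a ^ p + s * c * a ^ (p - 1)) with hφ
  set φ' := (fun a : ℝ => - (s * c) + (c - 1) * (p * a ^ (p - 1)) + s * c * ((p - 1) * a ^ (p - 2))) with hφ'
  set φ'' := (fun a : ℝ => (c - 1) * (p * ((p - 1) * a ^ (p - 2))) + s * c * ((p - 1) * ((p - 2) * a ^ (p - 3)))) with hφ''
  have d1 : ∀ a : ℝ, 0 < a → HasDerivAt φ (φ' a) a := by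
    intro a ha
    have e1 := Real.hasDerivAt_rpow_const (x := a) (p := p) (Or.inl ha.ne')
    have e2 := Real.hasDerivAt_rpow_const (x := a) (p := p - 1) (Or.inl ha.ne')
    have e3 := (((hasDerivAt_id a).const_mul (s * c)).const_sub (1 - c)).add (e1.const_mul (c - 1)) |>.add (e2.const_mul (s * c))
    refine e3.congr_deriv ?_
    simp only [hφ']
    rw [show p - 1 - 1 = p - 2 by ring]; ring
  have d2 : ∀ a : ℝ, 0 < a → HasDerivAt φ' (φ'' a) a := by
    intro a ha
    have e1 := Real.hasDerivAt_rpow_const (x := a) (p := p - 1) (Or.inl ha.ne')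
    have e2 := Real.hasDerivAt_rpow_const (x := a) (p := p - 2) (Or.inl ha.ne')
    have e3 := (((e1.const_mul p).const_mul (c - 1)).const_add (-(s * c))).add ((e2.const_mul (p - 1)).const_mul (s * c))
    refine e3.congr_deriv ?_
    simp only [hφ'']
    rw [show p - 1 - 1 = p - 2 by ring, show p - 2 - 1 = p - 3 by ring]
  have nn2 : ∀ a : ℝ, 1 ≤ a → 0 ≤ φ'' a := by
    intro a ha
    have ha0 : 0 < a := by linarith
    have e : a ^ (p - 2) = a * a ^ (p - 3) := by
      rw [show p - 2 = 1 + (p - 3) by ring, Real.rpow_add ha0, Real.rpow_one]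
    have : φ'' a = (p - 1) * a ^ (p - 3) * ((c - 1) * p * a + s * c * (p - 2)) := by
      simp only [hφ'', e]; ring
    rw [this]
    have hc1 : 1 ≤ c := by nlinarith
    refine mul_nonneg (mul_nonneg (by linarith) (Real.rpow_nonneg ha0.le _)) ?_
    have k : (c - 1) * p ≤ (c - 1) * p * a := by
      nlinarith [mul_nonneg (sub_nonneg.2 hc1) (by linarith : (0:ℝ) ≤ p)]
    rcases hs with rfl | rfl <;> nlinarith
  have hIntg : interior (Ici (1:ℝ)) = Ioi 1 := interior_Ici
  have conv1 : ConvexOn ℝ (Ici (1:ℝ)) φ := by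
    refine convexOn_of_hasDerivWithinAt2_nonneg (f' := φ') (f'' := φ'') (convex_Ici 1) ?_ ?_ ?_ ?_
    · intro a ha
      exact (d1 a (lt_of_lt_of_le one_pos ha)).continuousAt.continuousWithinAt
    · intro a ha; rw [hIntg] at ha
      exact (d1 a (lt_trans one_pos ha)).hasDerivWithinAt
    · intro a ha; rw [hIntg] at ha
      exact (d2 a (lt_trans one_pos ha)).hasDerivWithinAt
    · intro a ha; rw [hIntg] at ha
      exact nn2 a (le_of_lt ha)
  refine ⟨conv1, ?_⟩
  have mono' : MonotoneOn φ' (Ici 1) := by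
    refine monotoneOn_of_hasDerivWithinAt_nonneg (f' := φ'') (convex_Ici 1) ?_ ?_ ?_
    · intro a ha
      exact (d2 a (lt_of_lt_of_le one_pos ha)).continuousAt.continuousWithinAt
    · intro a ha; rw [hIntg] at ha
      exact (d2 a (lt_trans one_pos ha)).hasDerivWithinAt
    · intro a ha; rw [hIntg] at ha
      exact nn2 a (le_of_lt ha)
  refine monotoneOn_of_hasDerivWithinAt_nonneg (f' := φ') (convex_Ici 1) ?_ ?_ ?_
  · intro a ha
    exact (d1 a (lt_of_lt_of_le one_pos ha)).continuousAt.continuousWithinAt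
  · intro a ha; rw [hIntg] at ha
    exact (d1 a (lt_trans one_pos ha)).hasDerivWithinAt
  · intro a ha; rw [hIntg] at ha
    refine le_trans ?_ (mono' (mem_Ici.2 le_rfl) (mem_Ici.2 (le_of_lt ha)) (le_of_lt ha))
    simp only [hφ', Real.one_rpow]
    rcases hs with rfl | rfl <;> nlinarith

lemma comp_max_mid (φ : ℝ → ℝ) (hc : ConvexOn ℝ (Ici (1:ℝ)) φ) (hm : MonotoneOn φ (Ici (1:ℝ)))
    (a h : ℝ) : 2 * φ (max a 1) ≤ φ (max (a + h) 1) + φ (max (a - h) 1) := by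
  have m1 : (1:ℝ) ≤ max (a + h) 1 := le_max_right _ _
  have m2 : (1:ℝ) ≤ max (a - h) 1 := le_max_right _ _
  have k := hc.2 (mem_Ici.2 m1) (mem_Ici.2 m2) (show (0:ℝ) ≤ 1/2 by norm_num) (show (0:ℝ) ≤ 1/2 by norm_num) (by norm_num)
  simp only [smul_eq_mul] at k
  have k2 : φ (max a 1) ≤ φ (1 / 2 * max (a + h) 1 + 1 / 2 * max (a - h) 1) := by
    refine hm (mem_Ici.2 (le_max_right _ _)) (mem_Ici.2 (by linarith)) ?_
    refine max_le ?_ (by linarith)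
    have := le_max_left (a + h) 1
    have := le_max_left (a - h) 1
    linarith
  linarith

lemma k_mid (p c : ℝ) (hp : 1 < p) (h1 : p ≤ 2 * c) (h2 : p ≤ 2 * c * (p - 1)) (a h : ℝ) :
    (max |a + h| 1) ^ (p - 1) * (max |a + h| 1 - c * |a + h + 1|) +
    (max |a - h| 1) ^ (p - 1) * (max |a - h| 1 - c * |a - h + 1|) ≤
    2 * ((max |a| 1) ^ (p - 1) * (max |a| 1 - c * |a + 1|)) := by
  obtain ⟨c1, m1⟩ := phi_aux p c 1 hp (Or.inl rfl) h1 h2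
  obtain ⟨c2, m2⟩ := phi_aux p c (-1) hp (Or.inr rfl) h1 h2
  set φ₁ := (fun a : ℝ => (1 - c) - 1 * c * a + (c - 1) * a ^ p + 1 * c * a ^ (p - 1)) with hφ₁
  set φ₂ := (fun a : ℝ => (1 - c) - (-1) * c * a + (c - 1) * a ^ p + (-1) * c * a ^ (p - 1)) with hφ₂
  have key : ∀ a : ℝ, (max |a| 1) ^ (p - 1) * (max |a| 1 - c * |a + 1|) =
      (1 - c * (a + 1)) - φ₁ (max a 1) - φ₂ (max (-a) 1) := by
    intro a
    have e : ∀ a : ℝ, 0 < a → a ^ p = a * a ^ (p - 1) := fun a ha => by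
      conv_lhs => rw [show p = 1 + (p - 1) by ring, Real.rpow_add ha, Real.rpow_one]
    have z1 : φ₁ 1 = 0 := by simp [hφ₁]
    have z2 : φ₂ 1 = 0 := by simp [hφ₂]
    rcases le_total 1 a with ha | ha
    · rw [max_eq_left ha, max_eq_right (show -a ≤ 1 by linarith), z2, abs_of_nonneg (by linarith : 0 ≤ a),
        abs_of_nonneg (by linarith : 0 ≤ a + 1), max_eq_left ha]
      simp only [hφ₁]
      rw [e a (by linarith)]; ring
    · rcases le_total a (-1) with hb | hb
      · rw [max_eq_right ha, z1, max_eq_left (show 1 ≤ -a by linarith), abs_of_nonpos (by linarith : a ≤ 0),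
          abs_of_nonpos (by linarith : a + 1 ≤ 0), max_eq_left (show 1 ≤ -a by linarith)]
        simp only [hφ₂]
        rw [e (-a) (by linarith)]; ring
      · rw [max_eq_right ha, z1, max_eq_right (show -a ≤ 1 by linarith), z2,
          max_eq_right (abs_le.2 ⟨hb, ha⟩), abs_of_nonneg (by linarith : 0 ≤ a + 1), Real.one_rpow]
        ring
  rw [key, key, key]
  have t1 := comp_max_mid φ₁ c1 m1 a h
  have t2 := comp_max_mid φ₂ c2 m2 (-a) h
  rw [show -a + h = -(a - h) by ring, show -a - h = -(a + h) by ring] at t2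
  linarith

/-- The Burkholder function in rotated coordinates. -/
noncomputable def burkV (p c a b : ℝ) : ℝ := (max |a| |b|) ^ (p - 1) * (max |a| |b| - c * |a + b|)

lemma burkV_symm (p c a b : ℝ) : burkV p c a b = burkV p c b a := by
  simp only [burkV, max_comm |a| |b|, add_comm a b]

lemma burkV_mid (p c : ℝ) (hp : 1 < p) (h1 : p ≤ 2 * c) (h2 : p ≤ 2 * c * (p - 1)) (a b h : ℝ) :
    burkV p c (a + h) b + burkV p c (a - h) b ≤ 2 * burkV p c a b := by
  rcases eq_or_ne b 0 with rfl | hb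
  · have hc1 : 1 ≤ c := by nlinarith
    have e : ∀ a : ℝ, burkV p c a 0 = (1 - c) * ‖a‖ ^ p := by
      intro a
      simp only [burkV, abs_zero, add_zero, max_eq_left (abs_nonneg a), Real.norm_eq_abs]
      rcases eq_or_ne a 0 with rfl | ha
      · simp [Real.zero_rpow (by linarith : p ≠ 0)]
      · have : |a| ^ p = |a| * |a| ^ (p - 1) := by
          conv_lhs => rw [show p = 1 + (p - 1) by ring, Real.rpow_add (abs_pos.2 ha), Real.rpow_one]
        rw [this]; ring
    rw [e, e, e]
    have cv : ‖a‖ ^ p ≤ 1 / 2 * ‖a + h‖ ^ p + 1 / 2 * ‖a - h‖ ^ p := by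
      have k1 := (convexOn_rpow hp.le).2 (mem_Ici.2 (norm_nonneg (a + h))) (mem_Ici.2 (norm_nonneg (a - h)))
        (show (0:ℝ) ≤ 1/2 by norm_num) (show (0:ℝ) ≤ 1/2 by norm_num) (by norm_num)
      simp only [smul_eq_mul] at k1
      refine le_trans ?_ k1
      refine Real.rpow_le_rpow (norm_nonneg _) ?_ (by linarith)
      have := norm_add_le (a + h) (a - h)
      rw [show a + h + (a - h) = 2 * a by ring, norm_mul, Real.norm_ofNat] at this
      linarith
    nlinarith
  · have hb' : 0 < |b| := abs_pos.2 hb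
    have e : ∀ a : ℝ, burkV p c a b = |b| ^ p * ((max |a / b| 1) ^ (p - 1) * (max |a / b| 1 - c * |a / b + 1|)) := by
      intro a
      have e1 : max |a| |b| = |b| * max |a / b| 1 := by
        rw [mul_max_of_nonneg _ _ hb'.le, mul_one, abs_div, mul_div_cancel₀ _ hb'.ne']
      have e2 : |a + b| = |b| * |a / b + 1| := by
        rw [← abs_mul]; congr 1; field_simp
      have e3 : |b| ^ p = |b| * |b| ^ (p - 1) := by
          conv_lhs => rw [show p = 1 + (p - 1) by ring, Real.rpow_add hb', Real.rpow_one]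
      rw [burkV, e1, e2, Real.mul_rpow hb'.le (le_trans zero_le_one (le_max_right _ _)), e3]; ring
    rw [e, e, e]
    have := k_mid p c hp h1 h2 (a / b) (h / b)
    rw [← add_div, ← sub_div] at this
    have := mul_le_mul_of_nonneg_left this (Real.rpow_nonneg hb'.le p)
    linarith

/-- The Burkholder function. -/
noncomputable def burkW (p c x y : ℝ) : ℝ := burkV p c (x + y) (x - y)

lemma burkW_mid (p c : ℝ) (hp : 1 < p) (h1 : p ≤ 2 * c) (h2 : p ≤ 2 * c * (p - 1)) (x y h e : ℝ)
    (he : e = 1 ∨ e = -1) :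
    burkW p c (x + h) (y + e * h) + burkW p c (x - h) (y - e * h) ≤ 2 * burkW p c x y := by
  rcases he with rfl | rfl
  · have := burkV_mid p c hp h1 h2 (x + y) (x - y) (2 * h)
    simp only [burkW]
    convert this using 3 <;> ring
  · have := burkV_mid p c hp h1 h2 (x - y) (x + y) (2 * h)
    simp only [burkW]
    rw [burkV_symm p c (x + h + _), burkV_symm p c (x - h + _), burkV_symm p c (x + y)]
    convert this using 3 <;> ring

lemma burkW_start (p c : ℝ) (hp : 1 < p) (h1 : p ≤ 2 * c) (h2 : p ≤ 2 * c * (p - 1)) (x e : ℝ)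
    (he : e = 1 ∨ e = -1) : burkW p c x (e * x) ≤ 0 := by
  have hc1 : 1 ≤ c := by nlinarith
  have : burkW p c x (e * x) = |2 * x| ^ (p - 1) * ((1 - c) * |2 * x|) := by
    rcases he with rfl | rfl
    · simp only [burkW, burkV]; ring_nf; simp; ring
    · simp only [burkW, burkV]; ring_nf; simp; ring
  rw [this]
  have := abs_nonneg (2 * x)
  exact mul_nonpos_of_nonneg_of_nonpos (Real.rpow_nonneg this _) (by nlinarith)

lemma burkW_zero (p c : ℝ) : burkW p c 0 0 = 0 := by simp [burkW, burkV]

lemma burkW_lower (p c : ℝ) (hp : 1 < p) (hc1 : 1 ≤ c) : ∃ K : ℝ, 0 ≤ K ∧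
    ∀ x y, |y| ^ p ≤ 2 * burkW p c x y + K * |x| ^ p := by
  set d := 2 * c - 1 with hd
  have hd1 : 1 ≤ d := by linarith
  refine ⟨(2 * d) ^ p + 2 * ((2 * d + 1) ^ (p - 1) * d), by positivity, fun x y => ?_⟩
  have hx := abs_nonneg x
  have hy := abs_nonneg y
  have eW : burkW p c x y = (|x| + |y|) ^ (p - 1) * (|y| - d * |x|) := by
    have e1 : max |x + y| |x - y| = |x| + |y| := by
      rcases abs_cases x with ⟨a1, a2⟩ | ⟨a1, a2⟩ <;> rcases abs_cases y with ⟨b1, b2⟩ | ⟨b1, b2⟩ <;>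
      rcases abs_cases (x + y) with ⟨c1, c2⟩ | ⟨c1, c2⟩ <;> rcases abs_cases (x - y) with ⟨d1, d2⟩ | ⟨d1, d2⟩ <;>
      rcases max_cases |x + y| |x - y| with ⟨f1, f2⟩ | ⟨f1, f2⟩ <;> linarith
    have e2 : |x + y + (x - y)| = 2 * |x| := by
      rw [show x + y + (x - y) = 2 * x by ring, abs_mul]; norm_num
    rw [burkW, burkV, e1, e2, hd]; ring
  have er : ∀ a : ℝ, 0 ≤ a → a ^ p = a ^ (p - 1) * a := fun a ha => by
    conv_lhs => rw [show p = (p - 1) + 1 by ring, Real.rpow_add' ha (by linarith), Real.rpow_one]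
  rw [eW]
  rcases le_total (2 * d * |x|) |y| with h | h
  · have k1 : |y| ^ (p - 1) ≤ (|x| + |y|) ^ (p - 1) :=
      Real.rpow_le_rpow hy (by linarith) (by linarith)
    have k2 : |y| / 2 ≤ |y| - d * |x| := by linarith
    have k3 := mul_le_mul k1 k2 (by positivity) (by positivity)
    have k4 : 0 ≤ ((2 * d) ^ p + 2 * ((2 * d + 1) ^ (p - 1) * d)) * |x| ^ p := by positivity
    rw [er |y| hy]; linarith
  · have k1 : |y| ^ p ≤ (2 * d) ^ p * |x| ^ p := by
      rw [← Real.mul_rpow (by positivity) hx]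
      exact Real.rpow_le_rpow hy h (by linarith)
    have k2 : (|x| + |y|) ^ (p - 1) ≤ (2 * d + 1) ^ (p - 1) * |x| ^ (p - 1) := by
      rw [← Real.mul_rpow (by positivity) hx]
      exact Real.rpow_le_rpow (by positivity) (by linarith) (by linarith)
    have k3 : - ((2 * d + 1) ^ (p - 1) * |x| ^ (p - 1) * (d * |x|)) ≤ (|x| + |y|) ^ (p - 1) * (|y| - d * |x|) := by
      have := mul_le_mul_of_nonneg_right k2 (by positivity : 0 ≤ d * |x|)
      have := mul_nonneg (Real.rpow_nonneg (add_nonneg hx hy) (p - 1)) hy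
      linarith
    have k4 := er |x| hx
    have k5 : (2 * d + 1) ^ (p - 1) * |x| ^ (p - 1) * (d * |x|) = (2 * d + 1) ^ (p - 1) * d * |x| ^ p := by
      rw [k4]; ring
    linarith

open MeasureTheory Set

/-- Lebesgue measure on the unit interval. -/
noncomputable abbrev muI : Measure ℝ := volume.restrict (Icc (0:ℝ) 1)

instance muI_prob : IsProbabilityMeasure muI := ⟨by simp⟩

/-- Dyadic intervals in heap order. -/
noncomputable def dI (n : ℕ) : Set ℝ :=
  Ico ((n:ℝ) / 2 ^ (Nat.log 2 n) - 1) (((n:ℝ) + 1) / 2 ^ (Nat.log 2 n) - 1)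

/-- Haar functions in heap order. -/
noncomputable def haar (n : ℕ) (x : ℝ) : ℝ :=
  (dI (2 * n)).indicator (fun _ => (1:ℝ)) x - (dI (2 * n + 1)).indicator (fun _ => (1:ℝ)) x

lemma mem_dI (n : ℕ) (x : ℝ) : x ∈ dI n ↔
    (n:ℝ) ≤ 2 ^ (Nat.log 2 n) * (1 + x) ∧ 2 ^ (Nat.log 2 n) * (1 + x) < n + 1 := by
  have h : (0:ℝ) < 2 ^ (Nat.log 2 n) := by positivity
  rw [dI, mem_Ico, sub_le_iff_le_add, lt_sub_iff_add_lt, div_le_iff₀ h, lt_div_iff₀ h]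
  rw [mul_comm (x + 1), add_comm x]

lemma mem_dI_floor (n : ℕ) (hn : n ≠ 0) (x : ℝ) : x ∈ dI n ↔
    ⌊(2:ℝ) ^ (Nat.log 2 n) * (1 + x)⌋₊ = n := by
  rw [mem_dI, Nat.floor_eq_iff' hn]

lemma log_two_mul (n : ℕ) (hn : n ≠ 0) : Nat.log 2 (2 * n) = Nat.log 2 n + 1 := by
  rw [mul_comm, Nat.log_mul_base (by norm_num) hn]

lemma log_two_mul_add (n : ℕ) (hn : n ≠ 0) : Nat.log 2 (2 * n + 1) = Nat.log 2 n + 1 := by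
  rw [Nat.log_of_one_lt_of_le (by norm_num) (by omega)]
  congr 2; omega

lemma floor_shift (i k : ℕ) (x : ℝ) : ⌊(2:ℝ) ^ i * (1 + x)⌋₊ = ⌊(2:ℝ) ^ (i + k) * (1 + x)⌋₊ / 2 ^ k := by
  have := Nat.floor_div_natCast ((2:ℝ) ^ (i + k) * (1 + x)) (2 ^ k)
  rw [← this]
  congr 1
  push_cast
  rw [pow_add]; field_simp

lemma dI_subset (n : ℕ) (hn : n ≠ 0) : dI n ⊆ Ico 0 1 := by
  intro x hx
  rw [mem_dI] at hx
  have h1 : (2:ℝ) ^ (Nat.log 2 n) ≤ n := by exact_mod_cast Nat.pow_log_le_self 2 hn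
  have h2 : (n:ℝ) + 1 ≤ 2 ^ (Nat.log 2 n) * 2 := by
    have := Nat.lt_pow_succ_log_self (b := 2) (by norm_num) n
    rw [pow_succ] at this
    exact_mod_cast this
  have h : (0:ℝ) < 2 ^ (Nat.log 2 n) := by positivity
  constructor
  · by_contra hc
    push Not at hc
    nlinarith
  · by_contra hc
    push Not at hc
    nlinarith

lemma dI_one : dI 1 = Ico 0 1 := by
  simp [dI]
lemma dI_zero : dI 0 = Ico (-1) 0 := by
  simp [dI]

lemma haar_zero (x : ℝ) (hx : x ∈ Ico (0:ℝ) 1) : haar 0 x = -1 := by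
  have h1 : x ∉ dI 0 := by rw [dI_zero]; intro h; exact absurd hx.1 (not_le.2 h.2)
  have h2 : x ∈ dI 1 := by rw [dI_one]; exact hx
  simp [haar, h1, h2]

lemma dI_children (n : ℕ) (hn : n ≠ 0) (x : ℝ) :
    x ∈ dI n ↔ (x ∈ dI (2 * n) ∨ x ∈ dI (2 * n + 1)) := by
  rw [mem_dI_floor n hn, mem_dI_floor (2 * n) (by omega), mem_dI_floor (2 * n + 1) (by omega),
    log_two_mul n hn, log_two_mul_add n hn, floor_shift _ 1]
  omega

lemma dI_disj (n : ℕ) (x : ℝ) (h1 : x ∈ dI (2 * n)) (h2 : x ∈ dI (2 * n + 1)) : False := by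
  rcases eq_or_ne n 0 with rfl | hn
  · rw [Nat.mul_zero, dI_zero] at h1
    rw [Nat.mul_zero, zero_add, dI_one] at h2
    exact absurd h2.1 (not_le.2 h1.2)
  · rw [mem_dI_floor (2 * n) (by omega), log_two_mul n hn] at h1
    rw [mem_dI_floor (2 * n + 1) (by omega), log_two_mul_add n hn] at h2
    omega

lemma haar_left (n : ℕ) (x : ℝ) (h : x ∈ dI (2 * n)) : haar n x = 1 := by
  have : x ∉ dI (2 * n + 1) := fun h' => dI_disj n x h h'
  simp [haar, h, this]

lemma haar_right (n : ℕ) (x : ℝ) (h : x ∈ dI (2 * n + 1)) : haar n x = -1 := by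
  have : x ∉ dI (2 * n) := fun h' => dI_disj n x h' h
  simp [haar, h, this]

lemma haar_off (n : ℕ) (hn : n ≠ 0) (x : ℝ) (h : x ∉ dI n) : haar n x = 0 := by
  rw [dI_children n hn, not_or] at h
  simp [haar, h.1, h.2]

lemma haar_vals (n : ℕ) (x : ℝ) : haar n x = 1 ∨ haar n x = -1 ∨ haar n x = 0 := by
  by_cases h1 : x ∈ dI (2 * n)
  · exact Or.inl (haar_left n x h1)
  · by_cases h2 : x ∈ dI (2 * n + 1)
    · exact Or.inr (Or.inl (haar_right n x h2))
    · right; right; simp [haar, h1, h2]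

lemma measurableSet_dI (n : ℕ) : MeasurableSet (dI n) := measurableSet_Ico

lemma measurable_haar (n : ℕ) : Measurable (haar n) :=
  (measurable_const.indicator (measurableSet_dI _)).sub (measurable_const.indicator (measurableSet_dI _))

lemma haar_const (m n : ℕ) (hmn : m < n) : ∃ v : ℝ, ∀ x ∈ dI n, haar m x = v := by
  have hn : n ≠ 0 := by omega
  rcases eq_or_ne m 0 with rfl | hm
  · exact ⟨-1, fun x hx => haar_zero x (dI_subset n hn hx)⟩
  have hle : Nat.log 2 m ≤ Nat.log 2 n := Nat.log_mono_right hmn.le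
  rcases eq_or_lt_of_le hle with h | h
  · refine ⟨0, fun x hx => haar_off m hm x ?_⟩
    rw [mem_dI_floor n hn] at hx
    rw [mem_dI_floor m hm, h, hx]; omega
  · obtain ⟨k, hk⟩ := Nat.exists_eq_add_of_le (Nat.succ_le_of_lt h)
    have key : ∀ x ∈ dI n, ⌊(2:ℝ) ^ (Nat.log 2 m + 1) * (1 + x)⌋₊ = n / 2 ^ k := by
      intro x hx
      rw [mem_dI_floor n hn, hk] at hx
      rw [floor_shift _ k, hx]
    by_cases h1 : n / 2 ^ k = 2 * m
    · refine ⟨1, fun x hx => haar_left m x ?_⟩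
      rw [mem_dI_floor _ (by omega), log_two_mul m hm, key x hx, h1]
    · by_cases h2 : n / 2 ^ k = 2 * m + 1
      · refine ⟨-1, fun x hx => haar_right m x ?_⟩
        rw [mem_dI_floor _ (by omega), log_two_mul_add m hm, key x hx, h2]
      · refine ⟨0, fun x hx => haar_off m hm x ?_⟩
        rw [dI_children m hm, mem_dI_floor _ (by omega), log_two_mul m hm,
          mem_dI_floor _ (by omega), log_two_mul_add m hm, key x hx]
        tauto

lemma mu_dI (n : ℕ) (hn : n ≠ 0) : muI.real (dI n) = 1 / 2 ^ (Nat.log 2 n) := by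
  have hs : dI n ⊆ Icc 0 1 := (dI_subset n hn).trans Ico_subset_Icc_self
  rw [measureReal_def, Measure.restrict_apply (measurableSet_dI n), inter_eq_left.2 hs, dI,
    Real.volume_Ico, ENNReal.toReal_ofReal]
  · ring
  · have : (0:ℝ) < 1 / 2 ^ (Nat.log 2 n) := by positivity
    have e : ((n:ℝ) + 1) / 2 ^ (Nat.log 2 n) - 1 - ((n:ℝ) / 2 ^ (Nat.log 2 n) - 1) = 1 / 2 ^ (Nat.log 2 n) := by ring
    rw [e]; exact this.le

lemma mu_dI_children (n : ℕ) (hn : n ≠ 0) : muI.real (dI (2 * n)) = muI.real (dI (2 * n + 1)) := by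
  rw [mu_dI _ (by omega), mu_dI _ (by omega), log_two_mul n hn, log_two_mul_add n hn]

lemma ae_Ico : ∀ᵐ x ∂muI, x ∈ Ico (0:ℝ) 1 := by
  have h : muI = volume.restrict (Ico (0:ℝ) 1) := restrict_Ico_eq_restrict_Icc.symm
  rw [h]
  exact ae_restrict_mem measurableSet_Ico

lemma int_indicator (s : Set ℝ) (hs : MeasurableSet s) (a : ℝ) :
    Integrable (s.indicator (fun _ => a)) muI ∧ ∫ x, s.indicator (fun _ => a) x ∂muI = muI.real s * a := by
  refine ⟨(integrable_const a).indicator hs, ?_⟩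
  rw [integral_indicator hs, setIntegral_const, smul_eq_mul]

lemma burk_main (p c : ℝ) (hp : 1 < p) (h1 : p ≤ 2 * c) (h2 : p ≤ 2 * c * (p - 1))
    (a e : ℕ → ℝ) (he : ∀ n, e n = 1 ∨ e n = -1) (N : ℕ) :
    Integrable (fun x => burkW p c (∑ n ∈ Finset.range N, a n * haar n x)
      (∑ n ∈ Finset.range N, e n * a n * haar n x)) muI ∧
    ∫ x, burkW p c (∑ n ∈ Finset.range N, a n * haar n x)
      (∑ n ∈ Finset.range N, e n * a n * haar n x) ∂muI ≤ 0 := by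
  induction N with
  | zero => simp [burkW_zero]
  | succ n ih =>
    rcases eq_or_ne n 0 with rfl | hn
    · have : (fun x => burkW p c (∑ n ∈ Finset.range (0 + 1), a n * haar n x)
        (∑ n ∈ Finset.range (0 + 1), e n * a n * haar n x)) =ᵐ[muI] fun _ => burkW p c (-a 0) (e 0 * (- a 0)) := by
        filter_upwards [ae_Ico] with x hx
        simp [haar_zero x hx]
      refine ⟨(integrable_const _).congr this.symm, ?_⟩
      rw [integral_congr_ae this]
      simpa using burkW_start p c hp h1 h2 (-a 0) (e 0) (he 0)
    · have hv : ∀ m, ∃ v : ℝ, m < n → ∀ x ∈ dI n, haar m x = v := by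
        intro m
        by_cases hm : m < n
        · obtain ⟨v, hv⟩ := haar_const m n hm
          exact ⟨v, fun _ => hv⟩
        · exact ⟨0, fun h => absurd h hm⟩
      choose v hv using hv
      set X := ∑ m ∈ Finset.range n, a m * v m with hX
      set Y := ∑ m ∈ Finset.range n, e m * a m * v m with hY
      have hFX : ∀ x ∈ dI n, ∑ m ∈ Finset.range n, a m * haar m x = X := fun x hx =>
        Finset.sum_congr rfl fun m hm => by rw [hv m (Finset.mem_range.1 hm) x hx]
      have hGY : ∀ x ∈ dI n, ∑ m ∈ Finset.range n, e m * a m * haar m x = Y := fun x hx =>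
        Finset.sum_congr rfl fun m hm => by rw [hv m (Finset.mem_range.1 hm) x hx]
      set α := burkW p c (X + a n) (Y + e n * a n) - burkW p c X Y with hα
      set β := burkW p c (X - a n) (Y - e n * a n) - burkW p c X Y with hβ
      have hαβ : α + β ≤ 0 := by
        have := burkW_mid p c hp h1 h2 X Y (a n) (e n) (he n)
        linarith
      have key : (fun x => burkW p c (∑ n ∈ Finset.range (n + 1), a n * haar n x)
          (∑ n ∈ Finset.range (n + 1), e n * a n * haar n x)) = fun x =>
          burkW p c (∑ n ∈ Finset.range n, a n * haar n x) (∑ n ∈ Finset.range n, e n * a n * haar n x)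
          + ((dI (2 * n)).indicator (fun _ => α) x + (dI (2 * n + 1)).indicator (fun _ => β) x) := by
        funext x
        rw [Finset.sum_range_succ, Finset.sum_range_succ]
        by_cases hx : x ∈ dI n
        · rw [hFX x hx, hGY x hx]
          rcases (dI_children n hn x).1 hx with hl | hr
          · have : x ∉ dI (2 * n + 1) := fun h' => dI_disj n x hl h'
            rw [haar_left n x hl, indicator_of_mem hl, indicator_of_notMem this, hα]
            simp
          · have : x ∉ dI (2 * n) := fun h' => dI_disj n x h' hr
            rw [haar_right n x hr, indicator_of_mem hr, indicator_of_notMem this, hβ]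
            simp [sub_eq_add_neg]
        · have h' := hx
          rw [dI_children n hn, not_or] at h'
          rw [haar_off n hn x hx, indicator_of_notMem h'.1, indicator_of_notMem h'.2]
          simp
      obtain ⟨iA, eA⟩ := int_indicator (dI (2 * n)) (measurableSet_dI _) α
      obtain ⟨iB, eB⟩ := int_indicator (dI (2 * n + 1)) (measurableSet_dI _) β
      rw [key]
      refine ⟨ih.1.add (iA.add iB), ?_⟩
      have iAB : Integrable (fun x => (dI (2 * n)).indicator (fun _ => α) x + (dI (2 * n + 1)).indicator (fun _ => β) x) muI := iA.add iB
      rw [integral_add ih.1 iAB, integral_add iA iB, eA, eB, ← mu_dI_children n hn, ← mul_add]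
      have := mul_nonpos_of_nonneg_of_nonpos (measureReal_nonneg (μ := muI) (s := dI (2 * n))) hαβ
      linarith [ih.2]

lemma haar_abs (n : ℕ) (x : ℝ) : |haar n x| ≤ 1 := by
  rcases haar_vals n x with h | h | h <;> simp [h]

lemma bdd_integrable (f : ℝ → ℝ) (hf : Measurable f) (C : ℝ) (hC : ∀ x, |f x| ≤ C) : Integrable f muI :=
  Integrable.of_bound hf.aestronglyMeasurable C (Filter.Eventually.of_forall hC)

lemma integrable_haar_mul (m n : ℕ) : Integrable (fun x => haar m x * haar n x) muI := by
  refine bdd_integrable _ ((measurable_haar m).mul (measurable_haar n)) 1 fun x => ?_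
  rw [abs_mul]
  exact mul_le_one₀ (haar_abs m x) (abs_nonneg _) (haar_abs n x)

lemma haar_orth_lt (m n : ℕ) (h : m < n) : ∫ x, haar m x * haar n x ∂muI = 0 := by
  obtain ⟨v, hv⟩ := haar_const m n h
  have hn : n ≠ 0 := by omega
  have key : (fun x => haar m x * haar n x) = fun x =>
    (dI (2 * n)).indicator (fun _ => v) x + (dI (2 * n + 1)).indicator (fun _ => -v) x := by
    funext x
    by_cases hx : x ∈ dI n
    · rw [hv x hx]
      rcases (dI_children n hn x).1 hx with hl | hr
      · have : x ∉ dI (2 * n + 1) := fun h' => dI_disj n x hl h'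
        rw [haar_left n x hl, indicator_of_mem hl, indicator_of_notMem this]
        simp
      · have : x ∉ dI (2 * n) := fun h' => dI_disj n x h' hr
        rw [haar_right n x hr, indicator_of_mem hr, indicator_of_notMem this]
        simp
    · have h' := hx
      rw [dI_children n hn, not_or] at h'
      rw [haar_off n hn x hx, indicator_of_notMem h'.1, indicator_of_notMem h'.2]
      simp
  obtain ⟨iA, eA⟩ := int_indicator (dI (2 * n)) (measurableSet_dI _) v
  obtain ⟨iB, eB⟩ := int_indicator (dI (2 * n + 1)) (measurableSet_dI _) (-v)
  rw [key, integral_add iA iB, eA, eB, mu_dI_children n hn]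
  ring

lemma haar_orth (m n : ℕ) (h : m ≠ n) : ∫ x, haar m x * haar n x ∂muI = 0 := by
  rcases lt_or_gt_of_ne h with h | h
  · exact haar_orth_lt m n h
  · simp_rw [mul_comm (haar m _)]
    exact haar_orth_lt n m h

lemma haar_sq_pos (n : ℕ) : 0 < ∫ x, haar n x * haar n x ∂muI := by
  have h : ∃ k, k ≠ 0 ∧ ∀ x ∈ dI k, haar n x * haar n x = 1 :=
    ⟨2 * n + 1, by omega, fun x hx => by rw [haar_right n x hx]; norm_num⟩
  obtain ⟨k, hk, hx⟩ := h
  obtain ⟨iA, eA⟩ := int_indicator (dI k) (measurableSet_dI _) 1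
  have : ∫ x, (dI k).indicator (fun _ => (1:ℝ)) x ∂muI ≤ ∫ x, haar n x * haar n x ∂muI := by
    refine integral_mono iA (integrable_haar_mul n n) fun x => ?_
    by_cases h : x ∈ dI k
    · simp only [indicator_of_mem h, hx x h, le_refl]
    · simp only [indicator_of_notMem h]; exact mul_self_nonneg _
  rw [eA, mu_dI k hk] at this
  refine lt_of_lt_of_le ?_ this
  positivity

/-- Rademacher functions. -/
noncomputable def rad (j : ℕ) (x : ℝ) : ℝ := ∑ n ∈ Finset.Ico (2 ^ j) (2 ^ (j + 1)), haar n x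

lemma log_of_mem (j n : ℕ) (h : n ∈ Finset.Ico (2 ^ j) (2 ^ (j + 1))) : Nat.log 2 n = j := by
  rw [Finset.mem_Ico] at h
  exact Nat.log_eq_of_pow_le_of_lt_pow h.1 h.2

lemma measurable_rad (j : ℕ) : Measurable (rad j) :=
  Finset.measurable_fun_sum _ fun n _ => measurable_haar n

lemma rad_vals (j : ℕ) (x : ℝ) (hx : x ∈ Ico (0:ℝ) 1) : rad j x = 1 ∨ rad j x = -1 := by
  set v := ⌊(2:ℝ) ^ j * (1 + x)⌋₊ with hv
  have h2 : (0:ℝ) < 2 ^ j := by positivity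
  have hvm : v ∈ Finset.Ico (2 ^ j) (2 ^ (j + 1)) := by
    rw [Finset.mem_Ico]
    constructor
    · apply Nat.le_floor; push_cast; nlinarith [hx.1]
    · rw [hv, Nat.floor_lt (by nlinarith [hx.1])]
      push_cast; rw [pow_succ]; nlinarith [hx.2]
  have hv0 : v ≠ 0 := by
    have := (Finset.mem_Ico.1 hvm).1
    have := Nat.two_pow_pos j
    omega
  have e : rad j x = haar v x := by
    refine Finset.sum_eq_single v ?_ fun h => absurd hvm h
    intro n hn hne
    have hn0 : n ≠ 0 := by
      have := (Finset.mem_Ico.1 hn).1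
      have := Nat.two_pow_pos j
      omega
    refine haar_off n hn0 x ?_
    rw [mem_dI_floor n hn0, log_of_mem j n hn]
    exact fun h => hne h.symm
  rw [e]
  have : x ∈ dI v := by
    rw [mem_dI_floor v hv0, log_of_mem j v hvm]
  rcases (dI_children v hv0 x).1 this with h | h
  · exact Or.inl (haar_left v x h)
  · exact Or.inr (haar_right v x h)

lemma rad_orth (i j : ℕ) (h : i ≠ j) : ∫ x, rad i x * rad j x ∂muI = 0 := by
  simp only [rad, Finset.sum_mul_sum]
  rw [integral_finsetSum _ fun m _ => integrable_finsetSum _ fun n _ => integrable_haar_mul m n]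
  refine Finset.sum_eq_zero fun m hm => ?_
  rw [integral_finsetSum _ fun n _ => integrable_haar_mul m n]
  refine Finset.sum_eq_zero fun n hn => haar_orth m n ?_
  rintro rfl
  exact h ((log_of_mem i m hm).symm.trans (log_of_mem j m hn))

open MeasureTheory Set

theorem abstract_frame {E : Type*} [NormedAddCommGroup E] [NormedSpace ℝ E]
    (e : ℕ → E) (c : ℕ → E →L[ℝ] ℝ) (C : ℝ) (hC : 0 ≤ C)
    (hdense : Dense (Submodule.span ℝ (range e) : Set E))
    (hbi : ∀ m n, c m (e n) = if m = n then 1 else 0)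
    (hmult : ∀ (a t : ℕ → ℝ) (N : ℕ), (∀ n, |t n| ≤ 1) →
      ‖∑ n ∈ Finset.range N, (t n * a n) • e n‖ ≤ C * ‖∑ n ∈ Finset.range N, a n • e n‖)
    (P : E → Prop)
    (hblock : ∀ (n : ℕ) (ε : ℝ), 0 < ε → ∃ (g : ℕ × Bool → E) (w : ℕ × Bool → ℝ)
      (Q0 : Finset (ℕ × Bool)), (∀ q, P (g q)) ∧ (∀ Q, Q0 ⊆ Q → ∑ q ∈ Q, w q • g q = e n) ∧
      ∀ Q : Finset (ℕ × Bool), ∃ t : ℝ, |t| ≤ 1 ∧ ‖∑ q ∈ Q, w q • g q - t • e n‖ ≤ ε) :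
    ∃ (g : ℕ → E) (gs : ℕ → E →L[ℝ] ℝ), (∀ j, P (g j)) ∧
      ∀ f, HasSum (fun j => gs j f • g j) f := by
  classical
  set ε : ℕ → ℝ := fun n => (1 / 2) ^ n / (‖c n‖ + 1) with hε
  have hε0 : ∀ n, 0 < ε n := fun n => by
    have := norm_nonneg (c n)
    simp only [hε]; positivity
  choose g w Q0 hP hex happ using fun n => hblock n (ε n) (hε0 n)
  choose t ht happ using happ
  -- coefficients of elements of the span
  have hspan : ∀ v ∈ Submodule.span ℝ (range e), ∃ (a : ℕ → ℝ) (N : ℕ),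
      v = ∑ n ∈ Finset.range N, a n • e n ∧ ∀ m, c m v = if m < N then a m else 0 := by
    intro v hv
    obtain ⟨a, ha⟩ := (Finsupp.mem_span_range_iff_exists_finsupp).1 hv
    obtain ⟨N, hN⟩ := a.support.exists_nat_subset_range
    have hv' : v = ∑ n ∈ Finset.range N, a n • e n := by
      rw [← ha, Finsupp.sum]
      refine Finset.sum_subset hN fun n _ hn => ?_
      rw [Finsupp.notMem_support_iff.1 hn, zero_smul]
    refine ⟨a, N, hv', fun m => ?_⟩
    rw [hv', map_sum]
    simp [hbi]
  set T : Finset (ℕ × (ℕ × Bool)) → E →L[ℝ] E := fun S =>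
    ∑ i ∈ S, (w i.1 i.2 • c i.1).smulRight (g i.1 i.2) with hT
  have hTa : ∀ S f, T S f = ∑ i ∈ S, (w i.1 i.2 • c i.1) f • g i.1 i.2 := by
    intro S f
    simp [hT]
  have hTsum : ∀ (S : Finset (ℕ × (ℕ × Bool))) (A : Finset ℕ), S.image Prod.fst ⊆ A → ∀ f,
      T S f = ∑ n ∈ A, c n f • ∑ q ∈ (S.filter (fun i => i.1 = n)).image Prod.snd, w n q • g n q := by
    intro S A hA f
    rw [hTa, Finset.sum_finset_product S A (fun n => (S.filter (fun i => i.1 = n)).image Prod.snd)]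
    · refine Finset.sum_congr rfl fun n _ => ?_
      rw [Finset.smul_sum]
      refine Finset.sum_congr rfl fun q _ => ?_
      simp [smul_smul, mul_comm]
    · rintro ⟨n, q⟩
      constructor
      · intro h
        refine ⟨hA (Finset.mem_image_of_mem Prod.fst h), ?_⟩
        simp only [Finset.mem_image, Finset.mem_filter]
        exact ⟨(n, q), ⟨h, rfl⟩, rfl⟩
      · rintro ⟨-, h⟩
        simp only [Finset.mem_image, Finset.mem_filter] at h
        obtain ⟨⟨n', q'⟩, ⟨h1, h2⟩, h3⟩ := h
        simp only at h2 h3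
        subst h2; subst h3; exact h1
  -- uniform bound
  have hbound0 : ∀ S, ∀ v ∈ Submodule.span ℝ (range e), ‖T S v‖ ≤ (C + 2) * ‖v‖ := by
    intro S v hv
    obtain ⟨a, N, hva, hca⟩ := hspan v hv
    set A := S.image Prod.fst
    set Q : ℕ → Finset (ℕ × Bool) := fun n => (S.filter (fun i => i.1 = n)).image Prod.snd with hQ
    rw [hTsum S A le_rfl v]
    have split : ∑ n ∈ A, c n v • ∑ q ∈ Q n, w n q • g n q =
        ∑ n ∈ A, (t n (Q n) * c n v) • e n +
        ∑ n ∈ A, c n v • (∑ q ∈ Q n, w n q • g n q - t n (Q n) • e n) := by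
      rw [← Finset.sum_add_distrib]
      refine Finset.sum_congr rfl fun n _ => ?_
      rw [smul_sub, smul_smul, mul_comm (c n v) (t n (Q n))]; abel
    rw [split]
    have b1 : ‖∑ n ∈ A, (t n (Q n) * c n v) • e n‖ ≤ C * ‖v‖ := by
      have k := hmult a (fun n => if n ∈ A then t n (Q n) else 0) N (fun n => by
        by_cases h : n ∈ A
        · simp only [h, if_true]; exact ht n _
        · simp [h])
      rw [← hva] at k
      convert k using 2
      have l1 : ∑ n ∈ A, (t n (Q n) * c n v) • e n = ∑ n ∈ A, if n ∈ Finset.range N then (t n (Q n) * a n) • e n else 0 := by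
        refine Finset.sum_congr rfl fun n _ => ?_
        rw [hca]
        by_cases h : n < N <;> simp [h]
      have l2 : ∑ n ∈ Finset.range N, ((if n ∈ A then t n (Q n) else 0) * a n) • e n =
          ∑ n ∈ Finset.range N, if n ∈ A then (t n (Q n) * a n) • e n else 0 := by
        refine Finset.sum_congr rfl fun n _ => ?_
        by_cases h : n ∈ A <;> simp [h]
      rw [l1, l2, Finset.sum_ite_mem, Finset.sum_ite_mem, Finset.inter_comm]
    have b2 : ‖∑ n ∈ A, c n v • (∑ q ∈ Q n, w n q • g n q - t n (Q n) • e n)‖ ≤ 2 * ‖v‖ := by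
      have s1 : ∀ n ∈ A, ‖c n v • (∑ q ∈ Q n, w n q • g n q - t n (Q n) • e n)‖ ≤ (1 / 2) ^ n * ‖v‖ := by
        intro n _
        rw [norm_smul]
        have hn := norm_nonneg (c n)
        calc ‖c n v‖ * ‖∑ q ∈ Q n, w n q • g n q - t n (Q n) • e n‖
            ≤ (‖c n‖ * ‖v‖) * ε n := mul_le_mul ((c n).le_opNorm v) (happ n (Q n)) (norm_nonneg _) (by positivity)
          _ ≤ ((‖c n‖ + 1) * ‖v‖) * ε n := by
              have := (hε0 n).le
              gcongr; linarith
          _ = (1 / 2) ^ n * ‖v‖ := by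
              simp only [hε]; field_simp
      refine (norm_sum_le_of_le A s1).trans ?_
      rw [← Finset.sum_mul]
      refine mul_le_mul_of_nonneg_right ?_ (norm_nonneg v)
      refine le_trans (summable_geometric_two.sum_le_tsum A fun n _ => by positivity) ?_
      exact tsum_geometric_two.le
    refine (norm_add_le _ _).trans ?_
    linarith
  have hbound : ∀ S f, ‖T S f‖ ≤ (C + 2) * ‖f‖ := by
    intro S f
    have hcl : IsClosed {f | ‖T S f‖ ≤ (C + 2) * ‖f‖} :=
      isClosed_le (T S).continuous.norm (continuous_const.mul continuous_norm)
    exact hcl.closure_subset_iff.2 (hbound0 S) (hdense f)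
  have hconv : ∀ f, HasSum (fun i : ℕ × (ℕ × Bool) => (w i.1 i.2 • c i.1) f • g i.1 i.2) f := by
    intro f
    rw [HasSum, SummationFilter.unconditional_filter, Metric.tendsto_atTop]
    intro δ hδ
    obtain ⟨v, hv, hfv⟩ := Metric.mem_closure_iff.1 (hdense f) (δ / (C + 3)) (by positivity)
    obtain ⟨a, N, hva, hca⟩ := hspan v hv
    refine ⟨(Finset.range N).biUnion fun n => (Q0 n).image (fun q => (n, q)), fun S hS => ?_⟩
    rw [← hTa]
    have hTv : T S v = v := by
      rw [hTsum S (S.image Prod.fst ∪ Finset.range N) Finset.subset_union_left v]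
      rw [← Finset.sum_subset (Finset.subset_union_right (s₁ := S.image Prod.fst) (s₂ := Finset.range N))]
      · conv_rhs => rw [hva]
        refine Finset.sum_congr rfl fun n hn => ?_
        rw [hex, hca, if_pos (Finset.mem_range.1 hn)]
        intro q hq
        simp only [Finset.mem_image, Finset.mem_filter]
        refine ⟨(n, q), ⟨hS ?_, rfl⟩, rfl⟩
        simp only [Finset.mem_biUnion, Finset.mem_image]
        exact ⟨n, hn, q, hq, rfl⟩
      · intro n _ hn
        rw [hca, if_neg (by simpa using hn), zero_smul]
    have : T S f - f = T S (f - v) - (f - v) := by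
      rw [map_sub, hTv]; abel
    rw [dist_eq_norm, this]
    rw [dist_eq_norm] at hfv
    have h3 := hbound S (f - v)
    have h4 := norm_sub_le (T S (f - v)) (f - v)
    rw [lt_div_iff₀ (by positivity)] at hfv
    linarith
  obtain ⟨φ⟩ : Nonempty (ℕ ≃ ℕ × (ℕ × Bool)) := nonempty_equiv_of_countable
  refine ⟨fun j => g (φ j).1 (φ j).2, fun j => w (φ j).1 (φ j).2 • c (φ j).1, fun j => hP _ _, fun f => ?_⟩
  exact (φ.hasSum_iff (f := fun i : ℕ × (ℕ × Bool) => (w i.1 i.2 • c i.1) f • g i.1 i.2)).2 (hconv f)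

open MeasureTheory Set

lemma memLp_bd (q : ENNReal) (f : ℝ → ℝ) (hf : Measurable f) (C : ℝ) (hC : ∀ᵐ x ∂muI, |f x| ≤ C) :
    MemLp f q muI := MemLp.of_bound hf.aestronglyMeasurable C hC

lemma memLp_haar (q : ENNReal) (n : ℕ) : MemLp (haar n) q muI :=
  memLp_bd q _ (measurable_haar n) 1 (Filter.Eventually.of_forall (haar_abs n))

lemma memLp_sum (q : ENNReal) (f : ℕ → ℝ → ℝ) (hf : ∀ n, MemLp (f n) q muI) (a : ℕ → ℝ) (s : Finset ℕ) :
    MemLp (fun x => ∑ n ∈ s, a n * f n x) q muI :=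
  memLp_finsetSum s fun n _ => (hf n).const_mul (a n)

lemma sum_toLp (q : ENNReal) (f : ℕ → ℝ → ℝ) (hf : ∀ n, MemLp (f n) q muI) (a : ℕ → ℝ) (s : Finset ℕ) :
    ∑ n ∈ s, a n • (hf n).toLp (f n) = (memLp_sum q f hf a s).toLp _ := by
  classical
  induction s using Finset.induction_on with
  | empty =>
    rw [Finset.sum_empty, eq_comm]
    refine (MemLp.toLp_eq_toLp_iff _ (MemLp.zero (μ := muI) (p := q) (ε := ℝ))).2 ?_ |>.trans (MemLp.toLp_zero _)
    simp only [Finset.sum_empty]; rfl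
  | insert m s hm ih =>
    rw [Finset.sum_insert hm, ih, ← MemLp.toLp_const_smul, ← MemLp.toLp_add]
    refine (MemLp.toLp_eq_toLp_iff _ _).2 ?_
    refine Filter.Eventually.of_forall fun x => ?_
    simp [Finset.sum_insert hm]

lemma norm_toLp_rpow (p : ℝ) (hp : 1 < p) (f : ℝ → ℝ) (hf : MemLp f (ENNReal.ofReal p) muI) :
    ‖hf.toLp f‖ ^ p = ∫ x, |f x| ^ p ∂muI := by
  have hp0 : 0 < p := by linarith
  rw [Lp.norm_toLp, hf.eLpNorm_eq_integral_rpow_norm (by simpa using hp0) ENNReal.ofReal_ne_top,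
    ENNReal.toReal_ofReal hp0.le]
  have h0 : 0 ≤ ∫ x, ‖f x‖ ^ p ∂muI := integral_nonneg fun x => by positivity
  rw [ENNReal.toReal_ofReal (by positivity), Real.rpow_inv_rpow h0 hp0.ne']
  rfl

lemma integrable_rpow (p : ℝ) (hp : 1 < p) (f : ℝ → ℝ) (hf : MemLp f (ENNReal.ofReal p) muI) :
    Integrable (fun x => |f x| ^ p) muI := by
  have := hf.integrable_norm_rpow (by simp; linarith) ENNReal.ofReal_ne_top
  rwa [ENNReal.toReal_ofReal (by linarith)] at this

/-- The Haar system in `L^p`. -/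
noncomputable def eH (q : ENNReal) (n : ℕ) : Lp ℝ q muI := (memLp_haar q n).toLp (haar n)

lemma sign_bound (p : ℝ) (hp : 1 < p) [Fact (1 ≤ ENNReal.ofReal p)] : ∃ C : ℝ, 0 ≤ C ∧ ∀ (a e : ℕ → ℝ) (N : ℕ),
    (∀ n, e n = 1 ∨ e n = -1) → ‖∑ n ∈ Finset.range N, (e n * a n) • eH (ENNReal.ofReal p) n‖ ≤
      C * ‖∑ n ∈ Finset.range N, a n • eH (ENNReal.ofReal p) n‖ := by
  have hp0 : 0 < p := by linarith
  set c : ℝ := p / 2 + p / (2 * (p - 1)) with hc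
  have hq : 0 < p - 1 := by linarith
  have hpos : 0 < p / (2 * (p - 1)) := by positivity
  have h1 : p ≤ 2 * c := by linarith
  have h2 : p ≤ 2 * c * (p - 1) := by
    have : 2 * (p / (2 * (p - 1))) * (p - 1) = p := by field_simp
    nlinarith
  have hc1 : 1 ≤ c := by nlinarith
  obtain ⟨K, hK, hlow⟩ := burkW_lower p c hp hc1
  refine ⟨K ^ (p⁻¹), by positivity, fun a e N he => ?_⟩
  obtain ⟨iW, hW⟩ := burk_main p c hp h1 h2 a e he N
  simp only [eH]
  rw [sum_toLp _ haar (memLp_haar _) (fun n => e n * a n), sum_toLp _ haar (memLp_haar _) a]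
  set hG := memLp_sum (ENNReal.ofReal p) haar (memLp_haar _) (fun n => e n * a n) (Finset.range N)
  set hF := memLp_sum (ENNReal.ofReal p) haar (memLp_haar _) a (Finset.range N)
  have key : ‖hG.toLp _‖ ^ p ≤ K * ‖hF.toLp _‖ ^ p := by
    rw [norm_toLp_rpow p hp, norm_toLp_rpow p hp]
    calc ∫ x, |∑ n ∈ Finset.range N, e n * a n * haar n x| ^ p ∂muI
        ≤ ∫ x, (2 * burkW p c (∑ n ∈ Finset.range N, a n * haar n x)
            (∑ n ∈ Finset.range N, e n * a n * haar n x) +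
            K * |∑ n ∈ Finset.range N, a n * haar n x| ^ p) ∂muI := by
          refine integral_mono (integrable_rpow p hp _ hG)
            ((iW.const_mul 2).add ((integrable_rpow p hp _ hF).const_mul K)) fun x => hlow _ _
      _ ≤ _ := by
          rw [integral_add (iW.const_mul 2) ((integrable_rpow p hp _ hF).const_mul K),
            integral_const_mul, integral_const_mul]
          linarith
  have h0 : K ^ p⁻¹ * ‖hF.toLp _‖ = (K * ‖hF.toLp _‖ ^ p) ^ p⁻¹ := by
    rw [Real.mul_rpow hK (by positivity), Real.rpow_rpow_inv (norm_nonneg _) hp0.ne']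
  rw [h0]
  rw [← Real.rpow_rpow_inv (norm_nonneg (hG.toLp _)) hp0.ne']
  exact Real.rpow_le_rpow (by positivity) key (by positivity)

lemma mult_bound (p : ℝ) (hp : 1 < p) [Fact (1 ≤ ENNReal.ofReal p)] :
    ∃ C : ℝ, 0 ≤ C ∧ ∀ (a t : ℕ → ℝ) (N : ℕ),
    (∀ n, |t n| ≤ 1) → ‖∑ n ∈ Finset.range N, (t n * a n) • eH (ENNReal.ofReal p) n‖ ≤
      C * ‖∑ n ∈ Finset.range N, a n • eH (ENNReal.ofReal p) n‖ := by
  classical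
  obtain ⟨C, hC, hs⟩ := sign_bound p hp
  refine ⟨C, hC, fun a t N ht => ?_⟩
  set R := C * ‖∑ n ∈ Finset.range N, a n • eH (ENNReal.ofReal p) n‖
  -- replace signs by general multipliers one coordinate at a time
  have ind : ∀ M : ℕ, ∀ t : ℕ → ℝ, (∀ n, |t n| ≤ 1) → (∀ n, M ≤ n → t n = 1 ∨ t n = -1) →
      ‖∑ n ∈ Finset.range N, (t n * a n) • eH (ENNReal.ofReal p) n‖ ≤ R := by
    intro M
    induction M with
    | zero => exact fun t _ h => hs a t N fun n => h n (Nat.zero_le n)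
    | succ M ih =>
      intro t ht hM
      have hu : ∀ s : ℝ, (s = 1 ∨ s = -1) →
          ‖∑ n ∈ Finset.range N, (Function.update t M s n * a n) • eH (ENNReal.ofReal p) n‖ ≤ R := by
        intro s hs
        refine ih _ (fun n => ?_) (fun n hn => ?_)
        · by_cases h : n = M
          · subst h; rw [Function.update_self]; rcases hs with rfl | rfl <;> simp
          · rw [Function.update_of_ne h]; exact ht n
        · by_cases h : n = M
          · subst h; rw [Function.update_self]; exact hs
          · rw [Function.update_of_ne h]; exact hM n (by omega)
      have e : ∑ n ∈ Finset.range N, (t n * a n) • eH (ENNReal.ofReal p) n =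
          ((1 + t M) / 2) • ∑ n ∈ Finset.range N, (Function.update t M 1 n * a n) • eH (ENNReal.ofReal p) n +
          ((1 - t M) / 2) • ∑ n ∈ Finset.range N, (Function.update t M (-1) n * a n) • eH (ENNReal.ofReal p) n := by
        rw [Finset.smul_sum, Finset.smul_sum, ← Finset.sum_add_distrib]
        refine Finset.sum_congr rfl fun n _ => ?_
        rw [smul_smul, smul_smul, ← add_smul]
        congr 1
        by_cases h : n = M
        · subst h; rw [Function.update_self, Function.update_self]; ring
        · rw [Function.update_of_ne h, Function.update_of_ne h]; ring
      have hb := abs_le.1 (ht M)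
      rw [e]
      refine (norm_add_le _ _).trans ?_
      rw [norm_smul, norm_smul, Real.norm_of_nonneg (by linarith), Real.norm_of_nonneg (by linarith)]
      have k1 := mul_le_mul_of_nonneg_left (hu 1 (Or.inl rfl)) (by linarith : 0 ≤ (1 + t M) / 2)
      have k2 := mul_le_mul_of_nonneg_left (hu (-1) (Or.inr rfl)) (by linarith : 0 ≤ (1 - t M) / 2)
      linarith
  have e : ∑ n ∈ Finset.range N, (t n * a n) • eH (ENNReal.ofReal p) n =
      ∑ n ∈ Finset.range N, ((if n < N then t n else 1) * a n) • eH (ENNReal.ofReal p) n := by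
    refine Finset.sum_congr rfl fun n hn => ?_
    rw [if_pos (Finset.mem_range.1 hn)]
  rw [e]
  refine ind N _ (fun n => ?_) (fun n hn => ?_)
  · by_cases h : n < N
    · simp only [h, if_true]; exact ht n
    · simp [h]
  · left; rw [if_neg (by omega)]

lemma functionals (q : ENNReal) [hq : Fact (1 ≤ q)] : ∃ c : ℕ → Lp ℝ q muI →L[ℝ] ℝ,
    ∀ m n, c m (eH q n) = if m = n then 1 else 0 := by
  have : Fact (1 ≤ ENNReal.conjExponent q) := ⟨by rw [ENNReal.conjExponent]; exact le_self_add⟩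
  refine ⟨fun m => (∫ x, haar m x * haar m x ∂muI)⁻¹ •
    ((ContinuousLinearMap.mul ℝ ℝ).lpPairing muI q (ENNReal.conjExponent q)).flip (eH _ m), fun m n => ?_⟩
  have : ((ContinuousLinearMap.mul ℝ ℝ).lpPairing muI q (ENNReal.conjExponent q)).flip (eH _ m) (eH q n)
      = ∫ x, haar m x * haar n x ∂muI := by
    rw [ContinuousLinearMap.flip_apply, ContinuousLinearMap.lpPairing_eq_integral]
    refine integral_congr_ae ?_
    filter_upwards [(memLp_haar q n).coeFn_toLp, (memLp_haar (ENNReal.conjExponent q) m).coeFn_toLp] with x h1 h2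
    simp only [eH, h1, h2, ContinuousLinearMap.mul_apply']
    ring
  rw [smul_apply, this, smul_eq_mul]
  by_cases h : m = n
  · subst h; simp [inv_mul_cancel₀ (haar_sq_pos m).ne']
  · simp [h, haar_orth m n h]

lemma rad_sq_int (N : ℕ) (hN : 0 < N) (s : ℕ → ℝ) (hs : ∀ k, |s k| ≤ 1) :
    Integrable (fun x => (∑ k ∈ Finset.range N, s k / N * rad k x) ^ 2) muI ∧
    ∫ x, (∑ k ∈ Finset.range N, s k / N * rad k x) ^ 2 ∂muI ≤ 1 / N := by
  have hN' : (0:ℝ) < N := by exact_mod_cast hN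
  have hr : ∀ i j, Integrable (fun x => rad i x * rad j x) muI := by
    intro i j
    refine Integrable.of_bound ((measurable_rad i).mul (measurable_rad j)).aestronglyMeasurable 1 ?_
    filter_upwards [ae_Ico] with x hx
    rcases rad_vals i x hx with h | h <;> rcases rad_vals j x hx with h' | h' <;> simp [h, h']
  have hIntg : ∀ i j, Integrable (fun x => s i / N * rad i x * (s j / N * rad j x)) muI := by
    intro i j
    refine ((hr i j).const_mul (s i / N * (s j / N))).congr (Filter.Eventually.of_forall fun x => ?_)
    simp only; ring
  have hval : ∀ i j, ∫ x, s i / N * rad i x * (s j / N * rad j x) ∂muI =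
      (s i / N * (s j / N)) * ∫ x, rad i x * rad j x ∂muI := by
    intro i j
    rw [← integral_const_mul]
    congr 1; funext x; ring
  simp only [sq, Finset.sum_mul_sum]
  refine ⟨integrable_finsetSum _ fun i _ => integrable_finsetSum _ fun j _ => hIntg i j, ?_⟩
  rw [integral_finsetSum _ fun i _ => integrable_finsetSum _ fun j _ => hIntg i j]
  have : ∀ i ∈ Finset.range N, ∫ x, ∑ j ∈ Finset.range N, s i / N * rad i x * (s j / N * rad j x) ∂muI ≤ 1 / N * (1 / N) := by
    intro i hi
    rw [integral_finsetSum _ fun j _ => hIntg i j, Finset.sum_eq_single i]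
    · rw [hval]
      have e : ∫ x, rad i x * rad i x ∂muI = 1 := by
        have : (fun x => rad i x * rad i x) =ᵐ[muI] fun _ => (1:ℝ) := by
          filter_upwards [ae_Ico] with x hx
          rcases rad_vals i x hx with h | h <;> simp [h]
        rw [integral_congr_ae this]; simp
      rw [e, mul_one]
      have := abs_le.1 (hs i)
      have h2 : s i * s i ≤ 1 := by nlinarith
      calc s i / N * (s i / N) = s i * s i * (1 / N * (1 / N)) := by ring
        _ ≤ 1 * (1 / N * (1 / N)) := by gcongr
        _ = _ := one_mul _
    · intro j _ hj
      rw [hval, rad_orth i j hj.symm, mul_zero]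
    · exact fun h => absurd hi h
  refine (Finset.sum_le_sum this).trans ?_
  rw [Finset.sum_const, Finset.card_range, nsmul_eq_mul]
  apply le_of_eq; field_simp

/-- Rademacher functions cut off to the zero set of a Haar function. -/
noncomputable def cutRad (n k : ℕ) (x : ℝ) : ℝ := ({x | haar n x = 0} : Set ℝ).indicator (rad k) x

lemma measurable_cutRad (n k : ℕ) : Measurable (cutRad n k) :=
  (measurable_rad k).indicator (measurable_haar n (measurableSet_singleton 0))

lemma memLp_cutRad (q : ENNReal) (n k : ℕ) : MemLp (cutRad n k) q muI := by
  refine memLp_bd q _ (measurable_cutRad n k) 1 ?_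
  filter_upwards [ae_Ico] with x hx
  by_cases h : haar n x = 0
  · rw [cutRad, indicator_of_mem (by exact h)]
    rcases rad_vals k x hx with h | h <;> simp [h]
  · rw [cutRad, indicator_of_notMem (by exact h)]; simp

/-- The class of a cut-off Rademacher function. -/
noncomputable def uH (q : ENNReal) (n k : ℕ) : Lp ℝ q muI := (memLp_cutRad q n k).toLp (cutRad n k)

lemma small_rad_sum (p : ℝ) (hp : 1 < p) [Fact (1 ≤ ENNReal.ofReal p)] (n : ℕ) (ε : ℝ) (hε : 0 < ε) : ∃ N : ℕ, 0 < N ∧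
    ∀ s : ℕ → ℝ, (∀ k, |s k| ≤ 1) →
      ‖∑ k ∈ Finset.range N, (s k / N) • uH (ENNReal.ofReal p) n k‖ ≤ ε := by
  have hp0 : 0 < p := by linarith
  set δ := ε / 2 with hδ
  have hδ0 : 0 < δ := by positivity
  obtain ⟨N, hN⟩ := exists_nat_gt (2 / (δ ^ 2 * ε ^ p))
  have hN' : (0:ℝ) < N := lt_trans (by positivity) hN
  refine ⟨N, by exact_mod_cast hN', fun s hs => ?_⟩
  obtain ⟨iR, hR⟩ := rad_sq_int N (by exact_mod_cast hN') s hs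
  simp only [uH]
  rw [sum_toLp _ (cutRad n) (memLp_cutRad _ n) (fun k => s k / N)]
  set hX := memLp_sum (ENNReal.ofReal p) (cutRad n) (memLp_cutRad _ n) (fun k => s k / N) (Finset.range N)
  have key : ‖hX.toLp _‖ ^ p ≤ ε ^ p := by
    rw [norm_toLp_rpow p hp]
    have hpt : ∀ᵐ x ∂muI, |∑ k ∈ Finset.range N, s k / N * cutRad n k x| ^ p ≤
        δ ^ p + (1 / δ ^ 2) * (∑ k ∈ Finset.range N, s k / N * rad k x) ^ 2 := by
      filter_upwards [ae_Ico] with x hx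
      by_cases h : haar n x = 0
      · have e : ∀ k, cutRad n k x = rad k x := fun k => by
          rw [cutRad, indicator_of_mem (by exact h)]
        simp only [e]
        set Y := ∑ k ∈ Finset.range N, s k / N * rad k x with hY
        have hY1 : |Y| ≤ 1 := by
          refine (Finset.abs_sum_le_sum_abs _ _).trans ?_
          have : ∀ k ∈ Finset.range N, |s k / N * rad k x| ≤ 1 / N := by
            intro k _
            have hr : |rad k x| = 1 := by rcases rad_vals k x hx with h | h <;> simp [h]
            rw [abs_mul, hr, mul_one, abs_div, abs_of_pos hN']
            exact div_le_div_of_nonneg_right (hs k) hN'.le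
          refine (Finset.sum_le_sum this).trans ?_
          rw [Finset.sum_const, Finset.card_range, nsmul_eq_mul]
          apply le_of_eq; field_simp
        rcases le_total |Y| δ with hle | hle
        · have := Real.rpow_le_rpow (abs_nonneg Y) hle hp0.le
          have : 0 ≤ (1 / δ ^ 2) * Y ^ 2 := by positivity
          linarith
        · have h1 : |Y| ^ p ≤ 1 := Real.rpow_le_one (abs_nonneg _) hY1 hp0.le
          have h2 : 1 ≤ (1 / δ ^ 2) * Y ^ 2 := by
            rw [one_div, ← div_eq_inv_mul, le_div_iff₀ (by positivity), one_mul, ← sq_abs Y]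
            gcongr
          have : 0 ≤ δ ^ p := by positivity
          linarith
      · have e : ∀ k, cutRad n k x = 0 := fun k => by
          rw [cutRad, indicator_of_notMem (by exact h)]
        simp only [e, mul_zero, Finset.sum_const_zero, abs_zero, Real.zero_rpow hp0.ne']
        positivity
    have hIntg : Integrable (fun x => δ ^ p + (1 / δ ^ 2) * (∑ k ∈ Finset.range N, s k / N * rad k x) ^ 2) muI :=
      (integrable_const _).add (iR.const_mul _)
    refine (integral_mono_ae (integrable_rpow p hp _ hX) hIntg hpt).trans ?_
    rw [integral_add (integrable_const _) (iR.const_mul _), integral_const_mul]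
    have e1 : ∫ _, δ ^ p ∂muI = δ ^ p := by simp
    have e2 : δ ^ p ≤ ε ^ p / 2 := by
      rw [hδ, Real.div_rpow hε.le (by norm_num)]
      have : (2:ℝ) ≤ 2 ^ p := by
        conv_lhs => rw [← Real.rpow_one 2]
        exact Real.rpow_le_rpow_of_exponent_le (by norm_num) hp.le
      gcongr
    have e3 : (1 / δ ^ 2) * ∫ x, (∑ k ∈ Finset.range N, s k / N * rad k x) ^ 2 ∂muI ≤ ε ^ p / 2 := by
      refine (mul_le_mul_of_nonneg_left hR (by positivity)).trans ?_
      have hεp : 0 < ε ^ p := by positivity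
      rw [div_lt_iff₀ (by positivity)] at hN
      rw [div_mul_div_comm, one_mul, div_le_div_iff₀ (by positivity) (by norm_num)]
      linarith
    linarith
  exact (Real.rpow_le_rpow_iff (norm_nonneg _) hε.le hp0).1 key

lemma block (p : ℝ) (hp : 1 < p) [Fact (1 ≤ ENNReal.ofReal p)] (n : ℕ) (ε : ℝ) (hε : 0 < ε) :
    ∃ (g : ℕ × Bool → Lp ℝ (ENNReal.ofReal p) muI) (w : ℕ × Bool → ℝ)
      (Q0 : Finset (ℕ × Bool)), (∀ q, ∀ᵐ t ∂muI, g q t = 1 ∨ g q t = -1) ∧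
      (∀ Q, Q0 ⊆ Q → ∑ q ∈ Q, w q • g q = eH (ENNReal.ofReal p) n) ∧
      ∀ Q : Finset (ℕ × Bool), ∃ t : ℝ, |t| ≤ 1 ∧
        ‖∑ q ∈ Q, w q • g q - t • eH (ENNReal.ofReal p) n‖ ≤ ε := by
  classical
  obtain ⟨N, hN, hsm⟩ := small_rad_sum p hp n ε hε
  have hN' : (0:ℝ) < N := by exact_mod_cast hN
  set σ : Bool → ℝ := fun b => if b then 1 else -1 with hσ
  set g : ℕ × Bool → Lp ℝ (ENNReal.ofReal p) muI := fun q =>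
    eH (ENNReal.ofReal p) n + σ q.2 • uH (ENNReal.ofReal p) n q.1 with hg
  set w : ℕ × Bool → ℝ := fun q => if q.1 < N then 1 / (2 * N) else 0 with hw
  set Q0 : Finset (ℕ × Bool) := Finset.range N ×ˢ Finset.univ with hQ0
  have hw0 : ∀ q, q ∉ Q0 → w q = 0 := by
    intro q hq
    have : ¬ q.1 < N := by simpa [hQ0] using hq
    simp [hw, this]
  have hwn : ∀ q, 0 ≤ w q := fun q => by
    simp only [hw]; split_ifs <;> positivity
  have hred : ∀ {F : Type} [AddCommGroup F] [Module ℝ F] (Q : Finset (ℕ × Bool)) (v : ℕ × Bool → F),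
      ∑ q ∈ Q, w q • v q = ∑ k ∈ Finset.range N, (1 / (2 * (N:ℝ))) •
        ((if (k, true) ∈ Q then v (k, true) else 0) + (if (k, false) ∈ Q then v (k, false) else 0)) := by
    intro F _ _ Q v
    have a1 : ∑ q ∈ Q, w q • v q = ∑ q ∈ Q ∩ Q0, w q • v q := by
      refine (Finset.sum_subset Finset.inter_subset_left fun q hq hq' => ?_).symm
      rw [hw0 q fun h => hq' (Finset.mem_inter.2 ⟨hq, h⟩), zero_smul]
    rw [a1, Finset.inter_comm, ← Finset.sum_ite_mem, hQ0, Finset.sum_product]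
    refine Finset.sum_congr rfl fun k hk => ?_
    rw [Fintype.sum_bool]
    have hk' := Finset.mem_range.1 hk
    simp only [hw, hk', if_true, smul_add, smul_ite, smul_zero]
  have hw1 : ∀ Q : Finset (ℕ × Bool), Q0 ⊆ Q → ∑ q ∈ Q, w q = 1 := by
    intro Q hQ
    have := hred (F := ℝ) Q (fun _ => 1)
    simp only [smul_eq_mul, mul_one] at this
    rw [this]
    have : ∀ k ∈ Finset.range N, (1 / (2 * (N:ℝ)) * ((if (k, true) ∈ Q then 1 else 0) + (if (k, false) ∈ Q then 1 else 0))) = 1 / N := by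
      intro k hk
      rw [if_pos (hQ (by simpa [hQ0] using hk)), if_pos (hQ (by simpa [hQ0] using hk))]
      field_simp; norm_num
    rw [Finset.sum_congr rfl this, Finset.sum_const, Finset.card_range, nsmul_eq_mul]
    field_simp
  have hdiff : ∀ Q : Finset (ℕ × Bool), ∑ q ∈ Q, w q • g q =
      (∑ q ∈ Q, w q) • eH (ENNReal.ofReal p) n +
      ∑ q ∈ Q, w q • (σ q.2 • uH (ENNReal.ofReal p) n q.1) := by
    intro Q
    rw [Finset.sum_smul, ← Finset.sum_add_distrib]
    refine Finset.sum_congr rfl fun q _ => ?_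
    simp only [hg, smul_add]
  refine ⟨g, w, Q0, ?_, ?_, ?_⟩
  · intro q
    have a1 := Lp.coeFn_add (eH (ENNReal.ofReal p) n) (σ q.2 • uH (ENNReal.ofReal p) n q.1)
    have a2 := Lp.coeFn_smul (σ q.2) (uH (ENNReal.ofReal p) n q.1)
    have a3 := (memLp_haar (ENNReal.ofReal p) n).coeFn_toLp
    have a4 := (memLp_cutRad (ENNReal.ofReal p) n q.1).coeFn_toLp
    filter_upwards [a1, a2, a3, a4, ae_Ico] with x b1 b2 b3 b4 hx
    have : g q x = haar n x + σ q.2 * cutRad n q.1 x := by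
      simp only [hg]
      rw [b1, Pi.add_apply, b2, Pi.smul_apply, eH, uH, b3, b4, smul_eq_mul]
    rw [this]
    by_cases h : haar n x = 0
    · rw [cutRad, indicator_of_mem (by exact h), h]
      rcases rad_vals q.1 x hx with h | h <;> rcases q.2 <;> simp [h, hσ]
    · rw [cutRad, indicator_of_notMem (by exact h)]
      rcases haar_vals n x with h' | h' | h'
      · left; simp [h']
      · right; simp [h']
      · exact absurd h' h
  · intro Q hQ
    rw [hdiff, hw1 Q hQ, one_smul, hred]
    have : ∀ k ∈ Finset.range N, (1 / (2 * (N:ℝ))) •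
        ((if (k, true) ∈ Q then σ (k, true).2 • uH (ENNReal.ofReal p) n (k, true).1 else 0) +
        (if (k, false) ∈ Q then σ (k, false).2 • uH (ENNReal.ofReal p) n (k, false).1 else 0)) = 0 := by
      intro k hk
      rw [if_pos (hQ (by simpa [hQ0] using hk)), if_pos (hQ (by simpa [hQ0] using hk))]
      simp [hσ]
    rw [Finset.sum_congr rfl this]; simp
  · intro Q
    refine ⟨∑ q ∈ Q, w q, ?_, ?_⟩
    · rw [abs_of_nonneg (Finset.sum_nonneg fun q _ => hwn q), ← hw1 (Q ∪ Q0) Finset.subset_union_right]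
      exact Finset.sum_le_sum_of_subset_of_nonneg Finset.subset_union_left fun q _ _ => hwn q
    · rw [hdiff, add_sub_cancel_left, hred]
      have k := hsm (fun k => ((if (k, true) ∈ Q then 1 else 0) - (if (k, false) ∈ Q then 1 else 0)) / 2)
        (fun k => by split_ifs <;> norm_num)
      convert k using 2
      refine Finset.sum_congr rfl fun k _ => ?_
      have e1 : ∀ (b : Bool), (if (k, b) ∈ Q then σ (k, b).2 • uH (ENNReal.ofReal p) n (k, b).1 else 0) =
        ((if (k, b) ∈ Q then 1 else 0) * σ b) • uH (ENNReal.ofReal p) n k := by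
        intro b; split_ifs <;> simp
      rw [e1, e1, ← add_smul, smul_smul]
      congr 1
      simp only [hσ]
      field_simp
      simp
      try ring

open MeasureTheory Set

lemma memLp_ind (q : ENNReal) (n : ℕ) : MemLp ((dI n).indicator (fun _ => (1:ℝ))) q muI := by
  refine memLp_bd q _ (measurable_const.indicator (measurableSet_dI n)) 1 (Filter.Eventually.of_forall fun x => ?_)
  by_cases h : x ∈ dI n <;> simp [h]

lemma ind_mem_span (q : ENNReal) (n : ℕ) (hn : n ≠ 0) :
    (memLp_ind q n).toLp _ ∈ Submodule.span ℝ (range (eH q)) := by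
  induction n using Nat.strong_induction_on with
  | _ n ih =>
    rcases eq_or_ne n 1 with rfl | h1
    · have : (memLp_ind q 1).toLp _ = (-1 : ℝ) • eH q 0 := by
        rw [eH, ← MemLp.toLp_const_smul]
        refine (MemLp.toLp_eq_toLp_iff _ _).2 ?_
        filter_upwards [ae_Ico] with x hx
        rw [dI_one, indicator_of_mem hx]
        simp [haar_zero x hx]
      rw [this]
      exact Submodule.smul_mem _ _ (Submodule.subset_span ⟨0, rfl⟩)
    · obtain ⟨m, hm⟩ : ∃ m, n = 2 * m ∨ n = 2 * m + 1 := ⟨n / 2, by omega⟩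
      have hm0 : m ≠ 0 := by omega
      have key : ∃ s : ℝ, ∀ x, (dI n).indicator (fun _ => (1:ℝ)) x =
          (1 / 2) * ((dI m).indicator (fun _ => (1:ℝ)) x) + s * haar m x := by
        rcases hm with rfl | rfl
        · refine ⟨1 / 2, fun x => ?_⟩
          by_cases hx : x ∈ dI m
          · rcases (dI_children m hm0 x).1 hx with hl | hr
            · rw [haar_left m x hl, indicator_of_mem hl, indicator_of_mem hx]; norm_num
            · have : x ∉ dI (2 * m) := fun h' => dI_disj m x h' hr
              rw [haar_right m x hr, indicator_of_notMem this, indicator_of_mem hx]; norm_num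
          · have h' := hx
            rw [dI_children m hm0, not_or] at h'
            rw [haar_off m hm0 x hx, indicator_of_notMem h'.1, indicator_of_notMem hx]; norm_num
        · refine ⟨-(1 / 2), fun x => ?_⟩
          by_cases hx : x ∈ dI m
          · rcases (dI_children m hm0 x).1 hx with hl | hr
            · have : x ∉ dI (2 * m + 1) := fun h' => dI_disj m x hl h'
              rw [haar_left m x hl, indicator_of_notMem this, indicator_of_mem hx]; norm_num
            · rw [haar_right m x hr, indicator_of_mem hr, indicator_of_mem hx]; norm_num
          · have h' := hx
            rw [dI_children m hm0, not_or] at h'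
            rw [haar_off m hm0 x hx, indicator_of_notMem h'.2, indicator_of_notMem hx]; norm_num
      obtain ⟨s, hs⟩ := key
      have : (memLp_ind q n).toLp _ = (1 / 2 : ℝ) • (memLp_ind q m).toLp _ + s • eH q m := by
        rw [eH, ← MemLp.toLp_const_smul, ← MemLp.toLp_const_smul, ← MemLp.toLp_add]
        refine (MemLp.toLp_eq_toLp_iff _ _).2 (Filter.Eventually.of_forall fun x => ?_)
        rw [hs x]; simp
      rw [this]
      exact Submodule.add_mem _ (Submodule.smul_mem _ _ (ih m (by omega) hm0))
        (Submodule.smul_mem _ _ (Submodule.subset_span ⟨m, rfl⟩))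

lemma dense_span (q : ENNReal) [Fact (1 ≤ q)] (hq : q ≠ ⊤) :
    Dense (Submodule.span ℝ (range (eH q)) : Set (Lp ℝ q muI)) := by
  have hd := BoundedContinuousFunction.toLp_denseRange (p := q) ℝ muI ℝ hq
  suffices h : ∀ g : BoundedContinuousFunction ℝ ℝ, BoundedContinuousFunction.toLp q muI ℝ g ∈
      closure (Submodule.span ℝ (range (eH q)) : Set (Lp ℝ q muI)) by
    intro f
    exact isClosed_closure.closure_subset_iff.2 (range_subset_iff.2 h) (hd f)
  intro g
  rw [Metric.mem_closure_iff]
  intro ε hε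
  have huc : UniformContinuousOn g (Icc (0:ℝ) 1) :=
    isCompact_Icc.uniformContinuousOn_of_continuous g.continuous.continuousOn
  obtain ⟨δ, hδ, hg⟩ := Metric.uniformContinuousOn_iff.1 huc (ε / 2) (by positivity)
  obtain ⟨j, hj⟩ := exists_pow_lt_of_lt_one hδ (show (1/2:ℝ) < 1 by norm_num)
  set a : ℕ → ℝ := fun n => g ((n:ℝ) / 2 ^ j - 1) with ha
  set J := Finset.Ico (2 ^ j) (2 ^ (j + 1)) with hJ
  have hJ0 : ∀ n ∈ J, n ≠ 0 := by
    intro n hn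
    have := (Finset.mem_Ico.1 hn).1
    have := Nat.two_pow_pos j
    omega
  refine ⟨∑ n ∈ J, a n • (memLp_ind q n).toLp _, ?_, ?_⟩
  · exact Submodule.sum_mem _ fun n hn => Submodule.smul_mem _ _ (ind_mem_span q n (hJ0 n hn))
  · rw [sum_toLp q (fun n => (dI n).indicator (fun _ => (1:ℝ))) (memLp_ind q) a J, dist_eq_norm]
    have hS := memLp_sum q (fun n => (dI n).indicator (fun _ => (1:ℝ))) (memLp_ind q) a J
    refine lt_of_le_of_lt (b := ε / 2) ?_ (by linarith)
    have hb : ∀ᵐ x ∂muI, ‖(BoundedContinuousFunction.toLp q muI ℝ g - hS.toLp _ : Lp ℝ q muI) x‖ ≤ ε / 2 := by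
      filter_upwards [Lp.coeFn_sub (BoundedContinuousFunction.toLp q muI ℝ g) (hS.toLp _),
        BoundedContinuousFunction.coeFn_toLp (p := q) muI ℝ g, hS.coeFn_toLp, ae_Ico] with x h1 h2 h3 hx
      rw [h1, Pi.sub_apply, h2, h3]
      set v := ⌊(2:ℝ) ^ j * (1 + x)⌋₊ with hv
      have h2' : (0:ℝ) < 2 ^ j := by positivity
      have hvm : v ∈ J := by
        rw [Finset.mem_Ico]
        constructor
        · apply Nat.le_floor; push_cast; nlinarith [hx.1]
        · rw [hv, Nat.floor_lt (by nlinarith [hx.1])]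
          push_cast; rw [pow_succ]; nlinarith [hx.2]
      have e : ∑ n ∈ J, a n * (dI n).indicator (fun _ => (1:ℝ)) x = a v := by
        rw [Finset.sum_eq_single v]
        · have : x ∈ dI v := by
            rw [mem_dI_floor v (hJ0 v hvm), log_of_mem j v hvm]
          rw [indicator_of_mem this, mul_one]
        · intro n hn hne
          have : x ∉ dI n := by
            rw [mem_dI_floor n (hJ0 n hn), log_of_mem j n hn]
            exact fun h => hne h.symm
          rw [indicator_of_notMem this, mul_zero]
        · exact fun h => absurd hvm h
      rw [e, ha]
      have f1 : (v:ℝ) ≤ 2 ^ j * (1 + x) := Nat.floor_le (by nlinarith [hx.1])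
      have f2 : 2 ^ j * (1 + x) < v + 1 := Nat.lt_floor_add_one _
      have f3 : (2:ℝ) ^ j ≤ v := by exact_mod_cast (Finset.mem_Ico.1 hvm).1
      have g1 : (v:ℝ) / 2 ^ j - 1 ≤ x := by
        rw [sub_le_iff_le_add, div_le_iff₀ h2']; linarith
      have g2 : x - (1 / 2) ^ j ≤ (v:ℝ) / 2 ^ j - 1 := by
        have : (v:ℝ) / 2 ^ j - 1 - (x - (1 / 2) ^ j) = (v + 1 - 2 ^ j * (1 + x)) / 2 ^ j := by
          rw [one_div_pow]; field_simp; ring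
        have h5 : 0 ≤ (v + 1 - 2 ^ j * (1 + x)) / 2 ^ j := div_nonneg (by linarith) h2'.le
        linarith
      have g3 : 0 ≤ (v:ℝ) / 2 ^ j - 1 := by
        rw [sub_nonneg, le_div_iff₀ h2']; linarith
      have := hg x ⟨hx.1, hx.2.le⟩ ((v:ℝ) / 2 ^ j - 1) ⟨g3, g1.trans hx.2.le⟩ (by
        rw [Real.dist_eq, abs_of_nonneg (by linarith)]; linarith)
      rw [dist_eq_norm] at this
      exact this.le
    refine (Lp.norm_le_of_ae_bound (by positivity) hb).trans ?_
    have hm : measureUnivNNReal muI = 1 := by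
      apply NNReal.coe_injective
      have h1 : muI Set.univ = 1 := by simp [muI]
      simp [measureUnivNNReal, h1]
    rw [hm]; simp

end Helpers

open MeasureTheory

/-- For every `p > 1` there exist `{-1,+1}`-valued functions `g_j` on
`[0,1]` and bounded linear functionals `g_j*` on `L^p[0,1]` such that every
`f ∈ L^p[0,1]` admits the unconditionally convergent expansion
`f = ∑_j g_j*(f) g_j`. -/
theorem stmt6 (p : ℝ) (hp : 1 < p) [Fact (1 ≤ ENNReal.ofReal p)] :
    ∃ (g : ℕ → Lp ℝ (ENNReal.ofReal p) (volume.restrict (Set.Icc (0:ℝ) 1)))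
      (gs : ℕ → Lp ℝ (ENNReal.ofReal p) (volume.restrict (Set.Icc (0:ℝ) 1)) →L[ℝ] ℝ),
      (∀ j, ∀ᵐ t ∂(volume.restrict (Set.Icc (0:ℝ) 1)), g j t = 1 ∨ g j t = -1) ∧
      ∀ f, HasSum (fun j => gs j f • g j) f := by
  obtain ⟨c, hc⟩ := functionals (ENNReal.ofReal p)
  obtain ⟨C, hC, hm⟩ := mult_bound p hp
  exact abstract_frame (eH (ENNReal.ofReal p)) c C hC (dense_span _ ENNReal.ofReal_ne_top) hc hm
    (fun g => ∀ᵐ t ∂muI, g t = 1 ∨ g t = -1) (fun n ε hε => block p hp n ε hε)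
end
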